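/- arXiv:2404.17561 — 12 statements merged into one kernel-verified Lean document; each statement's English description precedes it below -/
import Mathlib

section
/- Let n ≥ 1, let V₁,…,V_{n+1} be real numbers, and let p₁,…,p_{n+1} be strictly positive weights with Σ_{i=1}^{n+1} p_i = 1. Then for every β ∈ (0,1): V_{n+1} ≤ Q(β; Σ_{i=1}^{n+1} p_i δ_{V_i}) if and only if V_{n+1} ≤ Q(β; Σ_{i=1}^{n} p_i δ_{V_i} + p_{n+1} δ_∞), where both inequalities are interpreted in ℝ ∪ {+∞}. -/
/-!
Whether `V_{n+1} ≤ Q` depends only on the distribution function at reals `s < V_{n+1}`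
(`le_wQuantile_iff`). At such `s` the last atom does not count, whether it sits at
`V_{n+1}` or at `+∞`, so the two distribution functions agree there.
-/

/-- Weighted empirical quantile: `Q(β; Σ_j q_j δ_{v_j})` is the infimum (in `ℝ ∪ {+∞}`,
modeled by `EReal`) of the real numbers `s` such that the total weight of atoms
`v_j ≤ s` is at least `β`; the infimum of the empty set is `+∞`. -/
noncomputable def wQuantile {m : ℕ} (β : ℝ) (q : Fin m → ℝ) (v : Fin m → EReal) : EReal :=
  sInf {x : EReal | ∃ s : ℝ, x = (s : EReal) ∧
    β ≤ ∑ j, q j * (if v j ≤ (s : EReal) then (1 : ℝ) else 0)}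

/-- A real threshold `a` lies below the quantile iff no real `s < a` already carries
weight `β`; only the distribution function strictly below `a` matters. -/
theorem le_wQuantile_iff {m : ℕ} (a β : ℝ) (q : Fin m → ℝ) (v : Fin m → EReal) :
    (a : EReal) ≤ wQuantile β q v ↔
      ∀ s : ℝ, s < a → ¬ β ≤ ∑ j, q j * (if v j ≤ (s : EReal) then (1 : ℝ) else 0) := by
  rw [wQuantile, le_sInf_iff]
  constructor
  · intro h s hs hβ
    exact absurd (EReal.coe_le_coe_iff.mp (h _ ⟨s, rfl, hβ⟩)) (not_le.mpr hs)
  · rintro h _ ⟨s, rfl, hβ⟩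
    exact EReal.coe_le_coe_iff.mpr (not_lt.mp fun hs => h s hs hβ)

/-- For `n ≥ 1`, reals `V₁,…,V_{n+1}`, strictly positive weights `p` summing
to one, and `β ∈ (0,1)`: `V_{n+1} ≤ Q(β; Σ_{i=1}^{n+1} p_i δ_{V_i})` iff
`V_{n+1} ≤ Q(β; Σ_{i=1}^{n} p_i δ_{V_i} + p_{n+1} δ_∞)`. -/
theorem stmt0 (n : ℕ) (hn : 1 ≤ n) (V p : Fin (n + 1) → ℝ)
    (hp : ∀ i, 0 < p i) (hsum : ∑ i, p i = 1) (β : ℝ) (hβ : β ∈ Set.Ioo (0 : ℝ) 1) :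
    ((V (Fin.last n) : EReal) ≤ wQuantile β p (fun i => (V i : EReal))) ↔
    ((V (Fin.last n) : EReal) ≤ wQuantile β p
      (fun i => if i = Fin.last n then (⊤ : EReal) else (V i : EReal))) := by
  rw [le_wQuantile_iff, le_wQuantile_iff]
  refine forall_congr' fun s => forall_congr' fun hs => ?_
  suffices h : ∀ j, ((V j : EReal) ≤ (s : EReal)) ↔
      ((if j = Fin.last n then (⊤ : EReal) else (V j : EReal)) ≤ (s : EReal)) by
    simp only [← h]
  intro j
  by_cases hj : j = Fin.last n
  · subst hj
    simp [hs]
  · simp [hj]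
end

section
/- Let 𝒵 be a countable nonempty set and let Z = (Z₁,…,Z_{n+1}) be a random vector taking values in 𝒵^{n+1} with probability mass function f. Let z₁,…,z_{n+1} ∈ 𝒵 be pairwise distinct, and let E_z denote the event that the unordered set {Z₁,…,Z_{n+1}} equals {z₁,…,z_{n+1}}. If P(E_z) > 0, then for every i ∈ {1,…,n+1}, P(Z_{n+1} = z_i | E_z) = p_i^f(z₁,…,z_{n+1}). -/
/-!
Since `z` is injective, the vectors `z ∘ σ` are distinct for distinct permutations `σ`, so the events
`{Z = z ∘ σ}` are pairwise disjoint and the probability that `Z = z ∘ σ` for some `σ` in a given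
set `S` of permutations is `∑ σ ∈ S, f (z ∘ σ)` (`measureReal_exists_perm`). Both `E` and
`E ∩ {Z_{n+1} = z_i}` are of this form, with `S` the set of all permutations and the set of those
with `σ (n+1) = i` respectively; the conditional probability is the quotient of the two sums.
-/

open MeasureTheory ProbabilityTheory

/-- The conformalization weight `p_i^f(z)`: the ratio of the sum of `f(z∘σ)` over
permutations `σ` of `{1,…,n+1}` with `σ(n+1) = i`, to the sum over all permutations. -/
noncomputable def permWeight {𝒵 : Type*} {n : ℕ} (f : (Fin (n + 1) → 𝒵) → ℝ)
    (z : Fin (n + 1) → 𝒵) (i : Fin (n + 1)) : ℝ :=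
  (∑ σ ∈ Finset.univ.filter (fun σ : Equiv.Perm (Fin (n + 1)) => σ (Fin.last n) = i),
      f (z ∘ σ)) / ∑ σ : Equiv.Perm (Fin (n + 1)), f (z ∘ σ)

/-- Finite additivity over the disjoint events `{Z = z ∘ σ}`, `σ ∈ S`. -/
lemma measureReal_exists_perm {𝒵 Ω : Type*} [Countable 𝒵] [MeasurableSpace 𝒵]
    [MeasurableSingletonClass 𝒵] [MeasurableSpace Ω] (μ : Measure Ω) [IsProbabilityMeasure μ]
    {n : ℕ} {Z : Ω → (Fin (n + 1) → 𝒵)} (hZ : Measurable Z)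
    {f : (Fin (n + 1) → 𝒵) → ℝ} (hf : ∀ a, (μ (Z ⁻¹' {a})).toReal = f a)
    {z : Fin (n + 1) → 𝒵} (hz : Function.Injective z)
    (S : Finset (Equiv.Perm (Fin (n + 1)))) :
    μ.real {ω | ∃ σ ∈ S, Z ω = z ∘ σ} = ∑ σ ∈ S, f (z ∘ σ) := by
  have hU : {ω | ∃ σ ∈ S, Z ω = z ∘ σ} = ⋃ σ ∈ S, Z ⁻¹' {z ∘ σ} := by
    ext ω
    simp
  rw [hU, measureReal_biUnion_finset]
  · exact Finset.sum_congr rfl fun σ _ => hf _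
  · intro σ _ τ _ hστ
    refine Disjoint.preimage Z (Set.disjoint_singleton.2 fun h => hστ ?_)
    exact Equiv.ext fun j => hz (congrFun h j)
  · exact fun σ _ => hZ (measurableSet_singleton _)

/-- If `Z = (Z₁,…,Z_{n+1})` is a random vector with values in a countable
space `𝒵` and probability mass function `f`, and `z₁,…,z_{n+1}` are pairwise distinct
points, then conditionally on the event `E_z` that the unordered set of values
`{Z₁,…,Z_{n+1}}` equals `{z₁,…,z_{n+1}}` (equivalently, `Z = z ∘ σ` for some
permutation `σ`), the probability that `Z_{n+1} = z_i` equals `p_i^f(z₁,…,z_{n+1})`. -/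
theorem stmt1 {𝒵 : Type*} [Countable 𝒵] [Nonempty 𝒵] [MeasurableSpace 𝒵]
    [MeasurableSingletonClass 𝒵]
    {Ω : Type*} [MeasurableSpace Ω] (μ : Measure Ω) [IsProbabilityMeasure μ]
    (n : ℕ) (Z : Ω → (Fin (n + 1) → 𝒵)) (hZ : Measurable Z)
    (f : (Fin (n + 1) → 𝒵) → ℝ) (hf : ∀ a, (μ (Z ⁻¹' {a})).toReal = f a)
    (z : Fin (n + 1) → 𝒵) (hz : Function.Injective z)
    (E : Set Ω) (hE : E = {ω | ∃ σ : Equiv.Perm (Fin (n + 1)), Z ω = z ∘ σ})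
    (hEpos : 0 < μ E) (i : Fin (n + 1)) :
    ((μ[|E]) {ω | Z ω (Fin.last n) = z i}).toReal = permWeight f z i := by
  have hEu : E = {ω | ∃ σ ∈ (Finset.univ : Finset (Equiv.Perm (Fin (n + 1)))), Z ω = z ∘ σ} := by
    simpa using hE
  have hEi : E ∩ {ω | Z ω (Fin.last n) = z i} = {ω | ∃ σ ∈ Finset.univ.filter
      (fun σ : Equiv.Perm (Fin (n + 1)) => σ (Fin.last n) = i), Z ω = z ∘ σ} := by
    ext ω
    simp only [hE, Set.mem_inter_iff, Set.mem_setOf_eq, Finset.mem_filter, Finset.mem_univ,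
      true_and]
    constructor
    · rintro ⟨⟨σ, hσ⟩, h⟩
      exact ⟨σ, hz (by simpa [hσ] using h), hσ⟩
    · rintro ⟨σ, hi, hσ⟩
      exact ⟨⟨σ, hσ⟩, by simp [hσ, hi]⟩
  have hEm : MeasurableSet E := by
    have : E = Z ⁻¹' {a | ∃ σ : Equiv.Perm (Fin (n + 1)), a = z ∘ σ} := hE
    rw [this]
    exact hZ (Set.to_countable _).measurableSet
  rw [cond_apply hEm, ENNReal.toReal_mul, ENNReal.toReal_inv, ← measureReal_def,
    ← measureReal_def, hEi, measureReal_exists_perm μ hZ hf hz, hEu,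
    measureReal_exists_perm μ hZ hf hz, permWeight, div_eq_inv_mul]
end

section
/- Let 𝒵 be a countable nonempty set and let Z = (Z₁,…,Z_{n+1}) be a random vector taking values in 𝒵^{n+1} with probability mass function f. Let s be a fixed function taking as input an element of 𝒵 and a multiset of n elements of 𝒵 and returning a real number, and for i ∈ {1,…,n+1} define V_i := s(Z_i, Z_{-i}), where Z_{-i} is the multiset {Z₁,…,Z_{n+1}} with Z_i removed. Assume V₁,…,V_{n+1} are almost surely pairwise distinct. Then for every β ∈ (0,1): P( V_{n+1} ≤ Q(β; Σ_{i=1}^{n} p_i^f(Z₁,…,Z_{n+1}) δ_{V_i} + p_{n+1}^f(Z₁,…,Z_{n+1}) δ_∞) ) ≥ β. -/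
/-!
The event "the last score is at most the quantile" contains the event that the total weight
`∑ p_j` over those `j` with `V_j < V_{n+1}` is less than `β`. The latter is a set `G` of values
of `Z`. Scores and weights are equivariant, `V_i(z ∘ σ) = V_{σ i}(z)` and
`p_i(z ∘ σ) = p_{σ i}(z)`, so averaging the probability mass function over the orbit of `z`
gives `∑_σ f(z ∘ σ) 1_G(z ∘ σ) = (∑_σ f(z ∘ σ)) · ∑_i p_i(z) 1{∑_{j : V_j < V_i} p_j < β}`.
By `le_sum_weight_low_rank` the last factor is at least `β` for any weights summing to one.
Summing over all `z`, where each permutation merely reindexes the sum, gives `P(Z ∈ G) ≥ β`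
(`le_tsum_indicator_of_orbit`).
-/


open MeasureTheory ProbabilityTheory

/-- For weights summing to one, the indices whose strictly smaller scores carry weight less than
`β` have total weight at least `β`: either every index is of this kind, or an index of minimal
score among the others has only indices of this kind below it, and these weigh at least `β`. -/
lemma le_sum_weight_low_rank {ι : Type*} [Fintype ι] (p v : ι → ℝ) (hp : ∀ i, 0 ≤ p i)
    (hsum : ∑ i, p i = 1) (β : ℝ) (hβ : β ≤ 1) :
    β ≤ ∑ i, p i * (if ∑ j with v j < v i, p j < β then (1 : ℝ) else 0) := by
  classical
  let B : Finset ι := Finset.univ.filter fun i => ¬ ∑ j with v j < v i, p j < β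
  rcases B.eq_empty_or_nonempty with hB | hB
  · have h : ∀ i, ∑ j with v j < v i, p j < β := by
      intro i
      by_contra hi
      have : i ∈ B := by simpa [B] using hi
      simp [hB] at this
    simpa [h, hsum] using hβ
  · obtain ⟨i, hi, hmin⟩ := B.exists_min_image v hB
    have hi' : β ≤ ∑ j with v j < v i, p j := by simpa [B] using hi
    refine hi'.trans ?_
    rw [Finset.sum_filter]
    refine Finset.sum_le_sum fun k _ => ?_
    by_cases hk : v k < v i
    · have : ∑ j with v j < v k, p j < β := by
        by_contra hk'
        exact absurd (hmin k (by simpa [B] using hk')) (not_le.2 hk)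
      simp [hk, this]
    · rw [if_neg hk]
      exact mul_nonneg (hp k) (by split_ifs <;> norm_num)

/-- The conformity scores `V_i = s(z_i, z_{-i})` as functions of the data vector. -/
def scoreVec {𝒵 : Type*} {n : ℕ} (s : 𝒵 → Multiset 𝒵 → ℝ) (z : Fin (n + 1) → 𝒵)
    (i : Fin (n + 1)) : ℝ :=
  s (z i) (Multiset.map z ((Finset.univ.erase i).val))

lemma scoreVec_comp {𝒵 : Type*} {n : ℕ} (s : 𝒵 → Multiset 𝒵 → ℝ) (z : Fin (n + 1) → 𝒵)
    (σ : Equiv.Perm (Fin (n + 1))) (i : Fin (n + 1)) :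
    scoreVec s (z ∘ σ) i = scoreVec s z (σ i) := by
  have h : Multiset.map σ ((Finset.univ.erase i).val) = (Finset.univ.erase (σ i)).val := by
    have h2 : (Finset.univ.erase i).map σ.toEmbedding = Finset.univ.erase (σ i) := by
      ext k
      simp
    rw [← h2]
    rfl
  unfold scoreVec
  rw [← h, Multiset.map_map]
  rfl

lemma permWeight_comp {𝒵 : Type*} {n : ℕ} (f : (Fin (n + 1) → 𝒵) → ℝ)
    (z : Fin (n + 1) → 𝒵) (τ : Equiv.Perm (Fin (n + 1))) (i : Fin (n + 1)) :
    permWeight f (z ∘ τ) i = permWeight f z (τ i) := by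
  unfold permWeight
  congr 1
  · rw [Finset.sum_filter, Finset.sum_filter]
    refine Fintype.sum_equiv (Equiv.mulLeft τ) _ _ fun σ => ?_
    simp [Function.comp_assoc]
  · refine Fintype.sum_equiv (Equiv.mulLeft τ) _ _ fun σ => ?_
    simp [Function.comp_assoc]

lemma permWeight_nonneg {𝒵 : Type*} {n : ℕ} {f : (Fin (n + 1) → 𝒵) → ℝ} (hf : ∀ a, 0 ≤ f a)
    (z : Fin (n + 1) → 𝒵) (i : Fin (n + 1)) : 0 ≤ permWeight f z i :=
  div_nonneg (Finset.sum_nonneg fun _ _ => hf _) (Finset.sum_nonneg fun _ _ => hf _)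

lemma sum_permWeight {𝒵 : Type*} {n : ℕ} {f : (Fin (n + 1) → 𝒵) → ℝ}
    {z : Fin (n + 1) → 𝒵} (hz : ∑ σ : Equiv.Perm (Fin (n + 1)), f (z ∘ σ) ≠ 0) :
    ∑ i, permWeight f z i = 1 := by
  unfold permWeight
  rw [← Finset.sum_div, Finset.sum_fiberwise, div_self hz]

/-- The set of data vectors for which the scores strictly below the last one carry weight less
than `β`. -/
def lowRankSet {𝒵 : Type*} {n : ℕ} (f : (Fin (n + 1) → 𝒵) → ℝ) (s : 𝒵 → Multiset 𝒵 → ℝ)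
    (β : ℝ) : Set (Fin (n + 1) → 𝒵) :=
  {z | ∑ j with scoreVec s z j < scoreVec s z (Fin.last n), permWeight f z j < β}

lemma comp_mem_lowRankSet {𝒵 : Type*} {n : ℕ} (f : (Fin (n + 1) → 𝒵) → ℝ)
    (s : 𝒵 → Multiset 𝒵 → ℝ) (β : ℝ) (z : Fin (n + 1) → 𝒵) (σ : Equiv.Perm (Fin (n + 1))) :
    z ∘ σ ∈ lowRankSet f s β ↔
      ∑ j with scoreVec s z j < scoreVec s z (σ (Fin.last n)), permWeight f z j < β := by
  unfold lowRankSet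
  simp only [Set.mem_ofPred_eq, scoreVec_comp, permWeight_comp]
  rw [Finset.sum_filter, Finset.sum_filter,
    Equiv.sum_comp σ fun j => if scoreVec s z j < scoreVec s z (σ (Fin.last n))
      then permWeight f z j else 0]

/-- The bound on a single orbit: conditionally on the unordered data, the last score has low rank
with probability at least `β`. -/
lemma orbit_bound {𝒵 : Type*} {n : ℕ} (f : (Fin (n + 1) → 𝒵) → ℝ) (hf : ∀ a, 0 ≤ f a)
    (s : 𝒵 → Multiset 𝒵 → ℝ) (β : ℝ) (hβ : β ≤ 1) (z : Fin (n + 1) → 𝒵) :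
    β * ∑ σ : Equiv.Perm (Fin (n + 1)), f (z ∘ σ) ≤
      ∑ σ : Equiv.Perm (Fin (n + 1)), (lowRankSet f s β).indicator f (z ∘ σ) := by
  classical
  by_cases hT : ∑ σ : Equiv.Perm (Fin (n + 1)), f (z ∘ σ) = 0
  · rw [hT, mul_zero]
    exact Finset.sum_nonneg fun σ _ => Set.indicator_nonneg (fun a _ => hf a) _
  have key := le_sum_weight_low_rank (permWeight f z) (scoreVec s z) (permWeight_nonneg hf z)
    (sum_permWeight hT) β hβ
  have hT0 : 0 ≤ ∑ σ : Equiv.Perm (Fin (n + 1)), f (z ∘ σ) := Finset.sum_nonneg fun _ _ => hf _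
  refine (mul_le_mul_of_nonneg_right key hT0).trans_eq ?_
  -- Group the permutations according to the value `σ (Fin.last n)`.
  rw [← Finset.sum_fiberwise Finset.univ
    (fun σ : Equiv.Perm (Fin (n + 1)) => σ (Fin.last n))
    (fun σ => (lowRankSet f s β).indicator f (z ∘ σ)), Finset.sum_mul]
  refine Finset.sum_congr rfl fun i _ => ?_
  rw [mul_right_comm, permWeight, div_mul_cancel₀ _ hT, Finset.sum_mul]
  refine Finset.sum_congr rfl fun σ hσ => ?_
  have hσ' : σ (Fin.last n) = i := by simpa using hσ
  simp only [Set.indicator_apply, comp_mem_lowRankSet, hσ', mul_ite, mul_one, mul_zero]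

/-- Averaging over orbits: an inequality between orbit sums of `f` and of `f` restricted to `G`
passes to the full sums, since precomposition with a permutation only reindexes them. -/
lemma le_tsum_indicator_of_orbit {𝒵 : Type*} {n : ℕ} (f : (Fin (n + 1) → 𝒵) → ℝ)
    (hsum : HasSum f 1) (G : Set (Fin (n + 1) → 𝒵)) (β : ℝ)
    (h : ∀ z, β * ∑ σ : Equiv.Perm (Fin (n + 1)), f (z ∘ σ) ≤
      ∑ σ : Equiv.Perm (Fin (n + 1)), G.indicator f (z ∘ σ)) :
    β ≤ ∑' z, G.indicator f z := by
  have reindex : ∀ (g : (Fin (n + 1) → 𝒵) → ℝ) (c : ℝ), HasSum g c →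
      HasSum (fun z => ∑ σ : Equiv.Perm (Fin (n + 1)), g (z ∘ σ))
        (Fintype.card (Equiv.Perm (Fin (n + 1))) * c) := by
    intro g c hg
    have := hasSum_sum (s := (Finset.univ : Finset (Equiv.Perm (Fin (n + 1)))))
      (f := fun (σ : Equiv.Perm (Fin (n + 1))) (z : Fin (n + 1) → 𝒵) => g (z ∘ σ)) (a := fun _ => c) fun σ _ =>
        (Equiv.hasSum_iff (Equiv.arrowCongr σ.symm (Equiv.refl 𝒵))).2 hg
    simpa [Finset.card_univ] using this
  have h1 := (reindex f 1 hsum).mul_left β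
  have h2 := reindex _ _ (hsum.summable.indicator G).hasSum
  have h3 := hasSum_le h h1 h2
  have hc : (0 : ℝ) < Fintype.card (Equiv.Perm (Fin (n + 1))) := by
    exact_mod_cast Fintype.card_pos
  refine le_of_mul_le_mul_left ?_ hc
  linarith

/-- general quantile inflation lemma: with `V_i = s(Z_i, Z_{-i})` almost
surely pairwise distinct, for every `β ∈ (0,1)`,
`P(V_{n+1} ≤ Q(β; Σ_{i≤n} p_i^f(Z) δ_{V_i} + p_{n+1}^f(Z) δ_∞)) ≥ β`. -/
theorem stmt2 {𝒵 : Type*} [Countable 𝒵] [Nonempty 𝒵] [MeasurableSpace 𝒵]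
    [MeasurableSingletonClass 𝒵]
    {Ω : Type*} [MeasurableSpace Ω] (μ : Measure Ω) [IsProbabilityMeasure μ]
    (n : ℕ) (Z : Ω → (Fin (n + 1) → 𝒵)) (hZ : Measurable Z)
    (f : (Fin (n + 1) → 𝒵) → ℝ) (hf : ∀ a, (μ (Z ⁻¹' {a})).toReal = f a)
    (s : 𝒵 → Multiset 𝒵 → ℝ) (V : Fin (n + 1) → Ω → ℝ)
    (hV : ∀ i ω, V i ω = s (Z ω i) (Multiset.map (Z ω) ((Finset.univ.erase i).val)))
    (hdist : ∀ᵐ ω ∂μ, ∀ i j, i ≠ j → V i ω ≠ V j ω)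
    (β : ℝ) (hβ : β ∈ Set.Ioo (0 : ℝ) 1) :
    β ≤ (μ {ω | (V (Fin.last n) ω : EReal) ≤
          wQuantile β (fun i => permWeight f (Z ω) i)
            (fun i => if i = Fin.last n then (⊤ : EReal) else (V i ω : EReal))}).toReal := by
  classical
  have hf0 : ∀ a, 0 ≤ f a := fun a => hf a ▸ ENNReal.toReal_nonneg
  have hVs : ∀ i ω, V i ω = scoreVec s (Z ω) i := hV
  -- Probabilities of events about `Z` are sums of the mass function.
  have hpmf : ∀ A : Set (Fin (n + 1) → 𝒵), HasSum (A.indicator f) (μ (Z ⁻¹' A)).toReal := by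
    intro A
    have hA : MeasurableSet A := A.to_countable.measurableSet
    have h1 := Measure.tsum_indicator_apply_singleton (μ.map Z) A hA
    rw [Measure.map_apply hZ hA] at h1
    have hne : ∑' x, A.indicator (fun x => μ.map Z {x}) x ≠ ⊤ := by
      rw [h1]
      exact measure_ne_top _ _
    have h2 := ENNReal.hasSum_toReal hne
    rw [← ENNReal.tsum_toReal_eq (fun a => ENNReal.ne_top_of_tsum_ne_top hne a), h1] at h2
    convert h2 using 2 with a
    by_cases ha : a ∈ A
    · simp [ha, ← hf, Measure.map_apply hZ (measurableSet_singleton a)]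
    · simp [ha]
  have hone : HasSum f 1 := by simpa using hpmf Set.univ
  have hG := le_tsum_indicator_of_orbit f hone (lowRankSet f s β) β
    (orbit_bound f hf0 s β hβ.2.le)
  rw [(hpmf _).tsum_eq] at hG
  refine hG.trans (ENNReal.toReal_mono (measure_ne_top _ _) (measure_mono ?_))
  intro ω hω
  have hω' : ∑ j with scoreVec s (Z ω) j < scoreVec s (Z ω) (Fin.last n),
    permWeight f (Z ω) j < β := hω
  rw [Set.mem_ofPred_eq, wQuantile]
  refine le_sInf ?_
  rintro _ ⟨t, rfl, ht⟩
  by_contra hlt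
  have hlt' : t < scoreVec s (Z ω) (Fin.last n) := by
    rw [← hVs]
    exact_mod_cast not_le.1 hlt
  -- Every atom at or below `t` lies strictly below the last score.
  refine absurd (ht.trans ?_) (not_le.2 hω')
  rw [Finset.sum_filter]
  refine Finset.sum_le_sum fun j _ => ?_
  have hp := permWeight_nonneg hf0 (Z ω) j
  by_cases hj : j = Fin.last n
  · simp [hj]
  · by_cases hjt : V j ω ≤ t
    · have : scoreVec s (Z ω) j < scoreVec s (Z ω) (Fin.last n) := by
        rw [← hVs j]
        exact hjt.trans_lt hlt'
      simp [hj, hjt, this]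
    · simp only [hj, if_false, EReal.coe_le_coe_iff, hjt, mul_zero]
      split_ifs <;> simp [hp]
end

section
/- Let f : 𝒵^{n+1} → [0,∞) be leave-one-out exchangeable with factorization f(z₁,…,z_{n+1}) = g({z₁,…,z_{n+1}}) · h̄({z₁,…,z_n}, z_{n+1}). Then for every z = (z₁,…,z_{n+1}) ∈ 𝒵^{n+1} and every i ∈ {1,…,n+1}: Σ_{σ ∈ S_{n+1} : σ(n+1)=i} f(z_{σ(1)},…,z_{σ(n+1)}) = n! · g({z₁,…,z_{n+1}}) · h̄(z_{-i}, z_i), where z_{-i} is the multiset {z₁,…,z_{n+1}} with z_i removed. Consequently, if g({z₁,…,z_{n+1}}) > 0 and Σ_{j=1}^{n+1} h̄(z_{-j}, z_j) > 0, then p_i^f(z) = h̄(z_{-i}, z_i) / Σ_{j=1}^{n+1} h̄(z_{-j}, z_j) for every i. -/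
/-- The fibres of `σ ↦ σ (n+1)` all have the same size, as left multiplication by a transposition
maps one onto another; since `n + 1` of them partition a set of size `(n+1)!`, each has size
`n!`. -/
lemma card_perm_last_eq (n : ℕ) (i : Fin (n + 1)) :
    (Finset.univ.filter (fun σ : Equiv.Perm (Fin (n + 1)) => σ (Fin.last n) = i)).card
      = n.factorial := by
  have hconst : ∀ j : Fin (n + 1),
      (Finset.univ.filter (fun σ : Equiv.Perm (Fin (n + 1)) => σ (Fin.last n) = j)).card
        = (Finset.univ.filter
            (fun σ : Equiv.Perm (Fin (n + 1)) => σ (Fin.last n) = i)).card := by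
    intro j
    refine Finset.card_equiv (Equiv.mulLeft (Equiv.swap i j)) fun σ => ?_
    simp [Equiv.swap_apply_eq_iff]
  have htotal := Finset.card_eq_sum_card_fiberwise
    (s := (Finset.univ : Finset (Equiv.Perm (Fin (n + 1))))) (t := Finset.univ)
    (f := fun σ => σ (Fin.last n)) (fun _ _ => by simp)
  rw [Finset.sum_congr rfl fun j _ => hconst j, Finset.card_univ, Fintype.card_perm] at htotal
  simp only [Fintype.card_fin, Finset.sum_const, Finset.card_univ, smul_eq_mul,
    Nat.factorial_succ] at htotal
  exact (Nat.eq_of_mul_eq_mul_left n.succ_pos htotal).symm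

lemma map_comp_perm_erase {α ι : Type*} [Fintype ι] [DecidableEq ι] (z : ι → α)
    (σ : Equiv.Perm ι) (k : ι) :
    Multiset.map (z ∘ σ) (Finset.univ.erase k).val
      = Multiset.map z (Finset.univ.erase (σ k)).val := by
  have himage : (Finset.univ.erase k).map σ.toEmbedding = Finset.univ.erase (σ k) := by
    rw [Finset.map_erase, Finset.map_univ_equiv]
    rfl
  rw [← himage, Finset.map_val, Multiset.map_map]
  rfl

lemma map_comp_perm_univ {α ι : Type*} [Fintype ι] (z : ι → α) (σ : Equiv.Perm ι) :
    Multiset.map (z ∘ σ) Finset.univ.val = Multiset.map z Finset.univ.val := by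
  conv_rhs => rw [← Finset.map_univ_equiv σ, Finset.map_val, Multiset.map_map]
  rfl

/-- A leave-one-out exchangeable function evaluated at `z ∘ σ` depends on `σ` only through
`σ (n+1)`. -/
lemma loo_comp_perm {𝒵 : Type*} {n : ℕ}
    {f : (Fin (n + 1) → 𝒵) → ℝ} {g : Multiset 𝒵 → ℝ} {h : Multiset 𝒵 → 𝒵 → ℝ}
    (hfact : ∀ y : Fin (n + 1) → 𝒵,
      f y = g (Multiset.map y Finset.univ.val) *
        h (Multiset.map y ((Finset.univ.erase (Fin.last n)).val)) (y (Fin.last n)))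
    (z : Fin (n + 1) → 𝒵) (σ : Equiv.Perm (Fin (n + 1))) :
    f (z ∘ σ) = g (Multiset.map z Finset.univ.val) *
      h (Multiset.map z ((Finset.univ.erase (σ (Fin.last n))).val)) (z (σ (Fin.last n))) := by
  rw [hfact, map_comp_perm_univ, map_comp_perm_erase, Function.comp_apply]

/-- if `f` is leave-one-out exchangeable, i.e.,
`f(z₁,…,z_{n+1}) = g({z₁,…,z_{n+1}}) · h̄({z₁,…,z_n}, z_{n+1})` with `g`, `h̄`
nonnegative, then for every `z` and every `i`,
`Σ_{σ : σ(n+1)=i} f(z_{σ(1)},…,z_{σ(n+1)}) = n! · g({z₁,…,z_{n+1}}) · h̄(z_{-i}, z_i)`,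
and consequently, under the stated positivity conditions,
`p_i^f(z) = h̄(z_{-i}, z_i) / Σ_j h̄(z_{-j}, z_j)`.
(Multisets of tuple coordinates are used to model unordered sets.) -/
theorem stmt3 {𝒵 : Type*} [Nonempty 𝒵] (n : ℕ)
    (f : (Fin (n + 1) → 𝒵) → ℝ) (g : Multiset 𝒵 → ℝ) (h : Multiset 𝒵 → 𝒵 → ℝ)
    (hg : ∀ M, 0 ≤ g M) (hh : ∀ M a, 0 ≤ h M a)
    (hfact : ∀ y : Fin (n + 1) → 𝒵,
      f y = g (Multiset.map y Finset.univ.val) *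
        h (Multiset.map y ((Finset.univ.erase (Fin.last n)).val)) (y (Fin.last n)))
    (z : Fin (n + 1) → 𝒵) (i : Fin (n + 1)) :
    (∑ σ ∈ Finset.univ.filter (fun σ : Equiv.Perm (Fin (n + 1)) => σ (Fin.last n) = i),
        f (z ∘ σ))
      = (n.factorial : ℝ) * g (Multiset.map z Finset.univ.val) *
          h (Multiset.map z ((Finset.univ.erase i).val)) (z i)
    ∧ (0 < g (Multiset.map z Finset.univ.val) →
        0 < ∑ j, h (Multiset.map z ((Finset.univ.erase j).val)) (z j) →
        permWeight f z i
          = h (Multiset.map z ((Finset.univ.erase i).val)) (z i) /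
              ∑ j, h (Multiset.map z ((Finset.univ.erase j).val)) (z j)) := by
  have hfibre : ∀ j : Fin (n + 1),
      (∑ σ ∈ Finset.univ.filter (fun σ : Equiv.Perm (Fin (n + 1)) => σ (Fin.last n) = j),
        f (z ∘ σ))
      = (n.factorial : ℝ) * g (Multiset.map z Finset.univ.val) *
          h (Multiset.map z ((Finset.univ.erase j).val)) (z j) := by
    intro j
    rw [Finset.sum_congr rfl (g := fun _ => g (Multiset.map z Finset.univ.val) *
      h (Multiset.map z ((Finset.univ.erase j).val)) (z j))]
    · rw [Finset.sum_const, card_perm_last_eq, nsmul_eq_mul, mul_assoc]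
    · intro σ hσ
      rw [loo_comp_perm hfact, (Finset.mem_filter.mp hσ).2]
  refine ⟨hfibre i, fun hgpos _ => ?_⟩
  have htotal : ∑ σ : Equiv.Perm (Fin (n + 1)), f (z ∘ σ)
      = (n.factorial : ℝ) * g (Multiset.map z Finset.univ.val) *
          ∑ j, h (Multiset.map z ((Finset.univ.erase j).val)) (z j) := by
    rw [← Finset.sum_fiberwise Finset.univ
      (fun σ : Equiv.Perm (Fin (n + 1)) => σ (Fin.last n)), Finset.mul_sum]
    exact Finset.sum_congr rfl fun j _ => hfibre j
  have hne : (n.factorial : ℝ) * g (Multiset.map z Finset.univ.val) ≠ 0 :=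
    mul_ne_zero (Nat.cast_ne_zero.mpr n.factorial_ne_zero) hgpos.ne'
  rw [permWeight, hfibre i, htotal, mul_div_mul_left _ _ hne]
end

section
/- Let 𝒵 be a countable nonempty set and let Z = (Z₁,…,Z_{n+1}) be a random vector in 𝒵^{n+1} whose probability mass function f is leave-one-out exchangeable with factorization f(z₁,…,z_{n+1}) = g({z₁,…,z_{n+1}}) · h̄({z₁,…,z_n}, z_{n+1}). Let s be a fixed function taking an element of 𝒵 and a multiset of n elements of 𝒵 to a real number, set V_i := s(Z_i, Z_{-i}) where Z_{-i} = {Z₁,…,Z_{n+1}} ∖ {Z_i} (as a multiset), assume V₁,…,V_{n+1} are almost surely pairwise distinct and Σ_{j=1}^{n+1} h̄(Z_{-j}, Z_j) > 0 almost surely, and define p_i(Z₁,…,Z_{n+1}) := h̄(Z_{-i}, Z_i) / Σ_{j=1}^{n+1} h̄(Z_{-j}, Z_j). Then for every β ∈ (0,1): P( V_{n+1} ≤ Q(β; Σ_{i=1}^{n} p_i(Z₁,…,Z_{n+1}) δ_{V_i} + p_{n+1}(Z₁,…,Z_{n+1}) δ_∞) ) ≤ β + E[ max_{i ∈ {1,…,n+1}}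 p_i(Z₁,…,Z_{n+1}) ]. -/
/-!
Write `H j y = h(y₋ⱼ, yⱼ)`. Permuting the coordinates of `y` by `σ` leaves `g` unchanged and turns
`H j` into `H (σ j)`, so summing the law of `Z` over the transpositions of `k` with the last index
gives `(n + 1) E φ(Z) = ∑_y g(y) ∑_k H k y φ(y ∘ (k last))` for every `φ ≥ 0`
(`card_mul_lintegral`): given the multiset of observations, the index playing the role of the last
one is `k` with probability `p_k`.

The coverage event implies that the weight `∑_{v_i < v_last} p_i` strictly below the last score is
less than `β` (`weight_below_lt`). The total weight of the indices `k` with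
`∑_{v_i < v_k} p_i < β` is at most `β + max p`: with distinct scores, all but the highest of these
indices lie strictly below it (`sum_lowIndex_le`). Averaging this inequality over `k` proves the
bound.
-/

open MeasureTheory ProbabilityTheory

open scoped ENNReal

/-- The leave-one-out weight `h̄(y₋ⱼ, yⱼ)`. -/
def looWeight {𝒵 : Type*} {n : ℕ} (h : Multiset 𝒵 → 𝒵 → ℝ) (j : Fin (n + 1))
    (y : Fin (n + 1) → 𝒵) : ℝ :=
  h (Multiset.map y ((Finset.univ.erase j).val)) (y j)

/-- The normalized weight `p_i(y)`; it is `0` when all the weights vanish. -/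
noncomputable def looProb {𝒵 : Type*} {n : ℕ} (h : Multiset 𝒵 → 𝒵 → ℝ) (i : Fin (n + 1))
    (y : Fin (n + 1) → 𝒵) : ℝ :=
  looWeight h i y / ∑ j, looWeight h j y

/-- The leave-one-out score `s(yᵢ, y₋ᵢ)`. -/
def looScore {𝒵 : Type*} {n : ℕ} (s : 𝒵 → Multiset 𝒵 → ℝ) (i : Fin (n + 1))
    (y : Fin (n + 1) → 𝒵) : ℝ :=
  s (y i) (Multiset.map y ((Finset.univ.erase i).val))

/-- The index `k` is low when the weight of the scores strictly below its own is less than `β`. -/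
def LowIndex {m : ℕ} (β : ℝ) (p v : Fin m → ℝ) (k : Fin m) : Prop :=
  ∑ i, (if v i < v k then p i else 0) < β

lemma map_comp_erase {𝒵 : Type*} {n : ℕ} (y : Fin (n + 1) → 𝒵) (σ : Equiv.Perm (Fin (n + 1)))
    (j : Fin (n + 1)) :
    Multiset.map (y ∘ σ) ((Finset.univ.erase j).val)
      = Multiset.map y ((Finset.univ.erase (σ j)).val) := by
  have hE : (Finset.univ.erase (σ j)) = (Finset.univ.erase j).map σ.toEmbedding := by
    ext x
    simp
  rw [hE, Finset.map_val, Multiset.map_map]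
  rfl

lemma map_comp_univ {𝒵 : Type*} {n : ℕ} (y : Fin (n + 1) → 𝒵) (σ : Equiv.Perm (Fin (n + 1))) :
    Multiset.map (y ∘ σ) Finset.univ.val
      = Multiset.map y (Finset.univ : Finset (Fin (n + 1))).val := by
  have hE : (Finset.univ : Finset (Fin (n + 1))) = Finset.univ.map σ.toEmbedding := by simp
  conv_rhs => rw [hE, Finset.map_val, Multiset.map_map]
  rfl

lemma looWeight_comp {𝒵 : Type*} {n : ℕ} (h : Multiset 𝒵 → 𝒵 → ℝ) (j : Fin (n + 1))
    (y : Fin (n + 1) → 𝒵) (σ : Equiv.Perm (Fin (n + 1))) :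
    looWeight h j (y ∘ σ) = looWeight h (σ j) y := by
  rw [looWeight, looWeight, map_comp_erase, Function.comp_apply]

lemma looScore_comp {𝒵 : Type*} {n : ℕ} (s : 𝒵 → Multiset 𝒵 → ℝ) (j : Fin (n + 1))
    (y : Fin (n + 1) → 𝒵) (σ : Equiv.Perm (Fin (n + 1))) :
    looScore s j (y ∘ σ) = looScore s (σ j) y := by
  rw [looScore, looScore, map_comp_erase, Function.comp_apply]

lemma looProb_comp {𝒵 : Type*} {n : ℕ} (h : Multiset 𝒵 → 𝒵 → ℝ) (j : Fin (n + 1))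
    (y : Fin (n + 1) → 𝒵) (σ : Equiv.Perm (Fin (n + 1))) :
    looProb h j (y ∘ σ) = looProb h (σ j) y := by
  simp only [looProb, looWeight_comp]
  rw [Equiv.sum_comp σ (fun j => looWeight h j y)]

lemma lowIndex_comp {m : ℕ} (β : ℝ) (p v : Fin m → ℝ) (σ : Equiv.Perm (Fin m)) (k : Fin m) :
    LowIndex β (fun i => p (σ i)) (fun i => v (σ i)) k ↔ LowIndex β p v (σ k) := by
  unfold LowIndex
  rw [Equiv.sum_comp σ (fun i => if v i < v (σ k) then p i else 0)]

lemma sup'_comp {m : ℕ} (p : Fin (m + 1) → ℝ) (σ : Equiv.Perm (Fin (m + 1))) :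
    Finset.univ.sup' Finset.univ_nonempty (fun i => p (σ i))
      = Finset.univ.sup' Finset.univ_nonempty p := by
  apply le_antisymm
  · exact Finset.sup'_le _ _ fun i _ => Finset.le_sup' p (Finset.mem_univ (σ i))
  · refine Finset.sup'_le _ _ fun i _ => ?_
    have := Finset.le_sup' (fun i => p (σ i)) (Finset.mem_univ (σ.symm i))
    rwa [Equiv.apply_symm_apply] at this

/-- If the real score `v k` is at most the weighted quantile in which the atom `k` is moved to
`+∞`, then the weight strictly below `v k` is less than `β`: otherwise the largest score below
`v k` would already be an upper bound for the quantile. -/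
lemma weight_below_lt {m : ℕ} {β : ℝ} (hβ : 0 < β) (p v : Fin m → ℝ) (hp : ∀ i, 0 ≤ p i)
    (k : Fin m)
    (hk : (v k : EReal) ≤ wQuantile β p (fun i => if i = k then (⊤ : EReal) else (v i : EReal))) :
    LowIndex β p v k := by
  classical
  unfold LowIndex
  by_contra! hcon
  have hne : (Finset.univ.filter (fun i => v i < v k)).Nonempty := by
    by_contra hE
    rw [Finset.not_nonempty_iff_eq_empty] at hE
    rw [← Finset.sum_filter, hE, Finset.sum_empty] at hcon
    linarith
  obtain ⟨i₀, hi₀, hmax⟩ := Finset.exists_max_image _ v hne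
  have hi₀' : v i₀ < v k := (Finset.mem_filter.mp hi₀).2
  have hle : wQuantile β p (fun i => if i = k then (⊤ : EReal) else (v i : EReal))
      ≤ (v i₀ : EReal) := by
    refine sInf_le ⟨v i₀, rfl, hcon.trans (Finset.sum_le_sum fun i _ => ?_)⟩
    by_cases hi : v i < v k
    · have h1 : i ≠ k := by rintro rfl; exact lt_irrefl _ hi
      have h2 : v i ≤ v i₀ := hmax i (by simp [hi])
      simp [hi, h1, h2]
    · rw [if_neg hi]
      exact mul_nonneg (hp i) (by split_ifs <;> norm_num)
  have := hk.trans hle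
  rw [EReal.coe_le_coe_iff] at this
  linarith

open Classical in
/-- For distinct scores, the low index with the highest score has all the others strictly below
it, so the total weight of the low indices is less than `β` plus the weight of that one. -/
lemma sum_lowIndex_le {m : ℕ} {β : ℝ} (hβ : 0 < β) (p v : Fin (m + 1) → ℝ) (hp : ∀ i, 0 ≤ p i)
    (hv : ∀ i j, i ≠ j → v i ≠ v j) :
    ∑ k, (if LowIndex β p v k then p k else 0)
      ≤ β + Finset.univ.sup' Finset.univ_nonempty p := by
  have hsup : ∀ k, p k ≤ Finset.univ.sup' Finset.univ_nonempty p :=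
    fun k => Finset.le_sup' p (Finset.mem_univ k)
  by_cases hne : (Finset.univ.filter (fun k => LowIndex β p v k)).Nonempty
  · obtain ⟨k₀, hk₀, hmax⟩ := Finset.exists_max_image _ v hne
    have hlow : LowIndex β p v k₀ := (Finset.mem_filter.mp hk₀).2
    have hle : ∑ k, (if LowIndex β p v k then p k else 0)
        ≤ ∑ k, ((if v k < v k₀ then p k else 0) + if k = k₀ then p k else 0) := by
      refine Finset.sum_le_sum fun k _ => ?_
      by_cases hk : LowIndex β p v k
      · by_cases hkk : k = k₀
        · simp [hkk, hlow]
        · have : v k < v k₀ := lt_of_le_of_ne (hmax k (by simp [hk])) (hv k k₀ hkk)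
          simp [hk, hkk, this]
      · rw [if_neg hk]
        have := hp k
        split_ifs <;> linarith
    rw [Finset.sum_add_distrib] at hle
    have h1 : ∑ k, (if k = k₀ then p k else 0) = p k₀ := by simp
    have := hsup k₀
    unfold LowIndex at hlow
    linarith
  · rw [Finset.not_nonempty_iff_eq_empty] at hne
    rw [← Finset.sum_filter, hne, Finset.sum_empty]
    have h1 := hp 0
    have h2 := hsup 0
    linarith

/-- The change-of-coordinates identity behind leave-one-out exchangeability: for each `k`, the sum
defining `E φ(Z)` is reindexed by the transposition of `k` with the last index. -/
lemma card_mul_lintegral {𝒵 : Type*} [Countable 𝒵] [MeasurableSpace 𝒵]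
    [MeasurableSingletonClass 𝒵]
    {Ω : Type*} [MeasurableSpace Ω] (μ : Measure Ω) [IsProbabilityMeasure μ]
    (n : ℕ) (Z : Ω → (Fin (n + 1) → 𝒵)) (hZ : Measurable Z)
    (g : Multiset 𝒵 → ℝ) (h : Multiset 𝒵 → 𝒵 → ℝ)
    (hlaw : ∀ y, μ (Z ⁻¹' {y}) = ENNReal.ofReal
      (g (Multiset.map y Finset.univ.val) * looWeight h (Fin.last n) y))
    (φ : (Fin (n + 1) → 𝒵) → ℝ≥0∞) :
    ((n + 1 : ℕ) : ℝ≥0∞) * ∫⁻ ω, φ (Z ω) ∂μ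
      = ∑' y, ∑ k, φ (y ∘ Equiv.swap k (Fin.last n)) *
          ENNReal.ofReal (g (Multiset.map y Finset.univ.val) * looWeight h k y) := by
  have hmap : ∫⁻ ω, φ (Z ω) ∂μ = ∑' y, φ y * ENNReal.ofReal
      (g (Multiset.map y Finset.univ.val) * looWeight h (Fin.last n) y) := by
    rw [← lintegral_map (μ := μ) (f := φ) (Measurable.of_discrete) hZ, lintegral_countable']
    refine tsum_congr fun y => ?_
    rw [Measure.map_apply hZ (measurableSet_singleton y), hlaw]
  have hk : ∀ k : Fin (n + 1), ∫⁻ ω, φ (Z ω) ∂μ =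
      ∑' y, φ (y ∘ Equiv.swap k (Fin.last n)) *
          ENNReal.ofReal (g (Multiset.map y Finset.univ.val) * looWeight h k y) := by
    intro k
    rw [hmap, ← Equiv.tsum_eq
      (Equiv.arrowCongr (Equiv.swap k (Fin.last n)) (Equiv.refl 𝒵))]
    refine tsum_congr fun y => ?_
    have hy : Equiv.arrowCongr (Equiv.swap k (Fin.last n)) (Equiv.refl 𝒵) y
        = y ∘ Equiv.swap k (Fin.last n) := by
      ext i
      simp [Equiv.arrowCongr]
    rw [hy, looWeight_comp, map_comp_univ, Equiv.swap_apply_right]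
  rw [Summable.tsum_finsetSum (fun _ _ => ENNReal.summable),
    ← Finset.sum_congr rfl (fun k _ => hk k)]
  simp

/-- coverage upper bound under leave-one-out exchangeability: if the pmf `f` of
`Z = (Z₁,…,Z_{n+1})` factorizes as `f(z) = g({z₁,…,z_{n+1}}) · h̄({z₁,…,z_n}, z_{n+1})`,
`V_i := s(Z_i, Z_{-i})` are a.s. pairwise distinct, `Σ_j h̄(Z_{-j}, Z_j) > 0` a.s., and
`p_i(Z) := h̄(Z_{-i}, Z_i) / Σ_j h̄(Z_{-j}, Z_j)`, then for every `β ∈ (0,1)`,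
`P(V_{n+1} ≤ Q(β; Σ_{i≤n} p_i(Z) δ_{V_i} + p_{n+1}(Z) δ_∞)) ≤ β + E[max_i p_i(Z)]`. -/
theorem stmt5 {𝒵 : Type*} [Countable 𝒵] [Nonempty 𝒵] [MeasurableSpace 𝒵]
    [MeasurableSingletonClass 𝒵]
    {Ω : Type*} [MeasurableSpace Ω] (μ : Measure Ω) [IsProbabilityMeasure μ]
    (n : ℕ) (Z : Ω → (Fin (n + 1) → 𝒵)) (hZ : Measurable Z)
    (f : (Fin (n + 1) → 𝒵) → ℝ) (hf : ∀ a, (μ (Z ⁻¹' {a})).toReal = f a)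
    (g : Multiset 𝒵 → ℝ) (h : Multiset 𝒵 → 𝒵 → ℝ)
    (hg : ∀ M, 0 ≤ g M) (hh : ∀ M a, 0 ≤ h M a)
    (hfact : ∀ y : Fin (n + 1) → 𝒵,
      f y = g (Multiset.map y Finset.univ.val) *
        h (Multiset.map y ((Finset.univ.erase (Fin.last n)).val)) (y (Fin.last n)))
    (hpos : ∀ᵐ ω ∂μ,
      0 < ∑ j, h (Multiset.map (Z ω) ((Finset.univ.erase j).val)) (Z ω j))
    (s : 𝒵 → Multiset 𝒵 → ℝ) (V : Fin (n + 1) → Ω → ℝ)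
    (hV : ∀ i ω, V i ω = s (Z ω i) (Multiset.map (Z ω) ((Finset.univ.erase i).val)))
    (hdist : ∀ᵐ ω ∂μ, ∀ i j, i ≠ j → V i ω ≠ V j ω)
    (β : ℝ) (hβ : β ∈ Set.Ioo (0 : ℝ) 1) :
    (μ {ω | (V (Fin.last n) ω : EReal) ≤
          wQuantile β
            (fun i => h (Multiset.map (Z ω) ((Finset.univ.erase i).val)) (Z ω i) /
              ∑ j, h (Multiset.map (Z ω) ((Finset.univ.erase j).val)) (Z ω j))
            (fun i => if i = Fin.last n then (⊤ : EReal) else (V i ω : EReal))}).toReal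
      ≤ β + ∫ ω, Finset.univ.sup' Finset.univ_nonempty
            (fun i => h (Multiset.map (Z ω) ((Finset.univ.erase i).val)) (Z ω i) /
              ∑ j, h (Multiset.map (Z ω) ((Finset.univ.erase j).val)) (Z ω j)) ∂μ := by
  classical
  have hβ0 := hβ.1
  set M : (Fin (n + 1) → 𝒵) → ℝ := fun y =>
    Finset.univ.sup' Finset.univ_nonempty (fun i => looProb h i y) with hM
  have hH0 : ∀ j (y : Fin (n + 1) → 𝒵), 0 ≤ looWeight h j y := fun j y => hh _ _
  have hS0 : ∀ y : Fin (n + 1) → 𝒵, 0 ≤ ∑ j, looWeight h j y :=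
    fun y => Finset.sum_nonneg fun j _ => hH0 j y
  have hp0 : ∀ j (y : Fin (n + 1) → 𝒵), 0 ≤ looProb h j y :=
    fun j y => div_nonneg (hH0 j y) (hS0 y)
  have hp1 : ∀ j (y : Fin (n + 1) → 𝒵), looProb h j y ≤ 1 := fun j y =>
    div_le_one_of_le₀
      (Finset.single_le_sum (fun i _ => hH0 i y) (Finset.mem_univ j)) (hS0 y)
  have hM0 : ∀ y, 0 ≤ M y := fun y =>
    (hp0 0 y).trans (Finset.le_sup' (fun i => looProb h i y) (Finset.mem_univ 0))
  have hM1 : ∀ y, M y ≤ 1 := fun y => Finset.sup'_le _ _ fun i _ => hp1 i y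
  have hlaw : ∀ y, μ (Z ⁻¹' {y}) = ENNReal.ofReal
      (g (Multiset.map y Finset.univ.val) * looWeight h (Fin.last n) y) := by
    intro y
    rw [looWeight, ← hfact, ← hf, ENNReal.ofReal_toReal (measure_ne_top _ _)]
  have key := card_mul_lintegral μ n Z hZ g h hlaw
  -- Distinctness of the scores at every point `y` that is a rearrangement of an atom of the law.
  have hdist' : ∀ (y : Fin (n + 1) → 𝒵) (k : Fin (n + 1)),
      0 < g (Multiset.map y Finset.univ.val) * looWeight h k y →
      ∀ i j, i ≠ j → looScore s i y ≠ looScore s j y := by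
    intro y k hk
    have hpos' : μ (Z ⁻¹' {y ∘ Equiv.swap k (Fin.last n)}) ≠ 0 := by
      rw [hlaw, looWeight_comp, map_comp_univ, Equiv.swap_apply_right]
      simpa using hk
    obtain ⟨ω, hω, hd⟩ : ∃ ω, Z ω = y ∘ Equiv.swap k (Fin.last n) ∧
        ∀ i j, i ≠ j → V i ω ≠ V j ω := by
      by_contra! hno
      refine hpos' (measure_mono_null (fun ω hω => ?_) hdist)
      obtain ⟨i, j, hij, hVij⟩ := hno ω hω
      exact fun hc => hc i j hij hVij
    intro i j hij hs
    refine hd (Equiv.swap k (Fin.last n) i) (Equiv.swap k (Fin.last n) j) (by simpa using hij) ?_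
    have hVs : ∀ l, V (Equiv.swap k (Fin.last n) l) ω = looScore s l y := by
      intro l
      have h1 : V (Equiv.swap k (Fin.last n) l) ω
          = looScore s (Equiv.swap k (Fin.last n) l) (Z ω) := hV _ _
      rw [h1, hω, looScore_comp, Equiv.swap_apply_self]
    rw [hVs, hVs, hs]
  set B : Set (Fin (n + 1) → 𝒵) := {y | LowIndex β (fun i => looProb h i y)
    (fun i => looScore s i y) (Fin.last n)} with hB
  have hBm : MeasurableSet (Z ⁻¹' B) := hZ (Set.to_countable B).measurableSet
  have hBcomp : ∀ y k, y ∘ Equiv.swap k (Fin.last n) ∈ B ↔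
      LowIndex β (fun i => looProb h i y) (fun i => looScore s i y) k := by
    intro y k
    simp only [hB, Set.mem_ofPred_eq, looProb_comp, looScore_comp]
    rw [lowIndex_comp β (fun i => looProb h i y) (fun i => looScore s i y)
      (Equiv.swap k (Fin.last n)), Equiv.swap_apply_right]
  have hMcomp : ∀ y k, M (y ∘ Equiv.swap k (Fin.last n)) = M y := by
    intro y k
    simp only [hM, looProb_comp]
    exact sup'_comp (fun i => looProb h i y) _
  have hpoint : ∀ y, ∑ k, B.indicator 1 (y ∘ Equiv.swap k (Fin.last n)) *
          ENNReal.ofReal (g (Multiset.map y Finset.univ.val) * looWeight h k y)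
      ≤ ∑ k, ENNReal.ofReal (β + M (y ∘ Equiv.swap k (Fin.last n))) *
          ENNReal.ofReal (g (Multiset.map y Finset.univ.val) * looWeight h k y) := by
    intro y
    have hG := hg (Multiset.map y Finset.univ.val)
    set G := g (Multiset.map y Finset.univ.val)
    have hL : ∀ k, B.indicator (1 : (Fin (n + 1) → 𝒵) → ℝ≥0∞) (y ∘ Equiv.swap k (Fin.last n)) *
          ENNReal.ofReal (G * looWeight h k y) = ENNReal.ofReal
          (if LowIndex β (fun i => looProb h i y) (fun i => looScore s i y) k
            then G * looWeight h k y else 0) := by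
      intro k
      simp only [Set.indicator_apply, hBcomp]
      split_ifs <;> simp
    simp only [hL, hMcomp]
    rw [← Finset.mul_sum, ← ENNReal.ofReal_sum_of_nonneg, ← ENNReal.ofReal_sum_of_nonneg,
      ← ENNReal.ofReal_mul (by linarith [hM0 y])]
    rotate_left
    · exact fun k _ => mul_nonneg hG (hH0 k y)
    · intro k _
      split_ifs
      · exact mul_nonneg hG (hH0 k y)
      · exact le_rfl
    apply ENNReal.ofReal_le_ofReal
    by_cases hex : ∃ k, 0 < G * looWeight h k y
    · obtain ⟨k₀, hk₀⟩ := hex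
      have hbound := sum_lowIndex_le hβ0 (fun i => looProb h i y) (fun i => looScore s i y)
        (fun i => hp0 i y) (hdist' y k₀ hk₀)
      have hHk : 0 < looWeight h k₀ y := by
        rcases (hH0 k₀ y).eq_or_lt with h0 | h0
        · rw [← h0] at hk₀
          simp at hk₀
        · exact h0
      have hSpos : 0 < ∑ j, looWeight h j y :=
        hHk.trans_le (Finset.single_le_sum (fun i _ => hH0 i y) (Finset.mem_univ k₀))
      have hHp : ∀ k, looWeight h k y = (∑ j, looWeight h j y) * looProb h k y := by
        intro k
        rw [looProb, mul_div_cancel₀ _ hSpos.ne']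
      calc _ = (G * ∑ j, looWeight h j y) *
            ∑ k, (if LowIndex β (fun i => looProb h i y) (fun i => looScore s i y) k
              then looProb h k y else 0) := by
            rw [Finset.mul_sum]
            refine Finset.sum_congr rfl fun k _ => ?_
            split_ifs
            · rw [mul_assoc, ← hHp]
            · simp
        _ ≤ (G * ∑ j, looWeight h j y) * (β + M y) :=
            mul_le_mul_of_nonneg_left hbound (mul_nonneg hG (hS0 y))
        _ = _ := by rw [← Finset.mul_sum, mul_comm]
    · have h0 : ∀ k, G * looWeight h k y = 0 := fun k =>
        le_antisymm (not_lt.mp fun hc => hex ⟨k, hc⟩) (mul_nonneg hG (hH0 k y))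
      simp [h0]
  have hmain : μ (Z ⁻¹' B) ≤ ∫⁻ ω, ENNReal.ofReal (β + M (Z ω)) ∂μ := by
    have hle := ENNReal.tsum_le_tsum hpoint
    rw [← key, ← key (fun y => ENNReal.ofReal (β + M y))] at hle
    have hind : ∫⁻ ω, B.indicator 1 (Z ω) ∂μ = μ (Z ⁻¹' B) := by
      rw [← lintegral_indicator_one hBm]
      rfl
    rw [hind] at hle
    exact (ENNReal.mul_le_mul_iff_right (by simp) (ENNReal.natCast_ne_top _)).mp hle
  have hMint : Integrable (fun ω => M (Z ω)) μ := by
    refine Integrable.of_bound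
      ((Measurable.of_discrete (f := M)).comp hZ).aestronglyMeasurable 1
      (Filter.Eventually.of_forall fun ω => ?_)
    rw [Real.norm_eq_abs, abs_of_nonneg (hM0 _)]
    exact hM1 _
  have hint : β + ∫ ω, M (Z ω) ∂μ = ∫ ω, (β + M (Z ω)) ∂μ := by
    rw [integral_add (integrable_const _) hMint]
    simp
  have hsumint : Integrable (fun ω => β + M (Z ω)) μ := (integrable_const _).add hMint
  have hsub : {ω | (V (Fin.last n) ω : EReal) ≤
          wQuantile β
            (fun i => h (Multiset.map (Z ω) ((Finset.univ.erase i).val)) (Z ω i) /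
              ∑ j, h (Multiset.map (Z ω) ((Finset.univ.erase j).val)) (Z ω j))
            (fun i => if i = Fin.last n then (⊤ : EReal) else (V i ω : EReal))} ⊆ Z ⁻¹' B := by
    intro ω hω
    simp only [Set.mem_ofPred_eq, hV] at hω
    exact weight_below_lt hβ0 (fun i => looProb h i (Z ω)) (fun i => looScore s i (Z ω))
      (fun i => hp0 i _) (Fin.last n) hω
  change _ ≤ β + ∫ ω, M (Z ω) ∂μ
  have hnn : ∀ ω, 0 ≤ β + M (Z ω) := fun ω => by linarith [hM0 (Z ω)]
  rw [hint]
  refine ENNReal.toReal_le_of_le_ofReal (integral_nonneg hnn) ?_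
  rw [ofReal_integral_eq_lintegral_ofReal hsumint
    (Filter.Eventually.of_forall hnn)]
  exact (measure_mono hsub).trans hmain
end

section
/- Let n ≥ 1, let S₁,…,S_{n+1} be real numbers, and let p₁,…,p_{n+1} and p̂₁,…,p̂_{n+1} be two collections of nonnegative weights, each summing to 1. Set Δ := (1/2) Σ_{i=1}^{n+1} |p̂_i − p_i| and let α ∈ (0,1) satisfy 1 − α − Δ > 0. Then Q(1−α; Σ_{i=1}^{n} p̂_i δ_{S_i} + p̂_{n+1} δ_∞) ≥ Q(1−α−Δ; Σ_{i=1}^{n+1} p_i δ_{S_i}), where the inequality is interpreted in ℝ ∪ {+∞}. -/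
/-- for reals `S₁,…,S_{n+1}`, nonnegative weight vectors `p` and `p̂` each
summing to one, `Δ := (1/2) Σ_i |p̂_i − p_i|`, and `α ∈ (0,1)` with `1 − α − Δ > 0`:
`Q(1−α; Σ_{i≤n} p̂_i δ_{S_i} + p̂_{n+1} δ_∞) ≥ Q(1−α−Δ; Σ_{i=1}^{n+1} p_i δ_{S_i})`,
in `ℝ ∪ {+∞}`. -/
theorem stmt6 (n : ℕ) (hn : 1 ≤ n) (S p phat : Fin (n + 1) → ℝ)
    (hp : ∀ i, 0 ≤ p i) (hphat : ∀ i, 0 ≤ phat i)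
    (hpsum : ∑ i, p i = 1) (hphatsum : ∑ i, phat i = 1)
    (α : ℝ) (hα : α ∈ Set.Ioo (0 : ℝ) 1)
    (hΔ : 0 < 1 - α - (1 / 2) * ∑ i, |phat i - p i|) :
    wQuantile (1 - α - (1 / 2) * ∑ i, |phat i - p i|) p (fun i => (S i : EReal))
      ≤ wQuantile (1 - α) phat
          (fun i => if i = Fin.last n then (⊤ : EReal) else (S i : EReal)) := by
  unfold wQuantile
  apply sInf_le_sInf
  rintro x ⟨s, rfl, hs⟩
  refine ⟨s, rfl, ?_⟩
  have key : ∀ i, phat i * (if (if i = Fin.last n then (⊤ : EReal) else (S i : EReal)) ≤ (s : EReal)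
        then (1 : ℝ) else 0)
      ≤ p i * (if (S i : EReal) ≤ (s : EReal) then (1 : ℝ) else 0)
        + ((1 / 2) * |phat i - p i| + (1 / 2) * (phat i - p i)) := by
    intro i
    have h1 := neg_abs_le (phat i - p i)
    have h2 := le_abs_self (phat i - p i)
    have h3 := hp i
    by_cases hi : i = Fin.last n
    · simp only [hi, if_true, top_le_iff, EReal.coe_ne_top, if_false, mul_zero]
      rw [← hi]
      split_ifs <;> linarith
    · simp only [hi, if_false]
      split_ifs <;> linarith
  have hsum := Finset.sum_le_sum (fun i (_ : i ∈ Finset.univ) => key i)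
  rw [Finset.sum_add_distrib, Finset.sum_add_distrib, ← Finset.mul_sum, ← Finset.mul_sum,
    Finset.sum_sub_distrib, hpsum, hphatsum] at hsum
  linarith
end

section
/- Let D be a finite nonempty set with weights w_x > 0 for each x ∈ D, let δ > 0, and let h > 0 satisfy h·δ > 1. Then the function Φ(τ; h) := h δ τ^{hδ−1} ∏_{x∈D} (1 − τ^{h w_x}), defined for τ ∈ (0,1), has a unique stationary point τ_h ∈ (0,1) (i.e., a unique zero of ∂Φ/∂τ on (0,1)), and τ_h is a strict global maximum of Φ(·; h) on (0,1): Φ(τ; h) < Φ(τ_h; h) for every τ ∈ (0,1) with τ ≠ τ_h. -/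
/-!
`Φ` extends continuously to `[0,1]`, vanishes at both endpoints (at `0` because `hδ > 1`, at `1`
because `D` is nonempty) and is positive inside, so its maximum over `[0,1]` is attained at an
interior point, which is stationary. On `(0,1)` the logarithmic derivative satisfies
`τ Φ'(τ) / Φ(τ) = (hδ - 1) - ∑ h w_x τ^{h w_x} / (1 - τ^{h w_x})` (`mul_logDeriv_profile`), and
each summand is strictly increasing in `τ`, so there is only one stationary point. A second point
with the maximal value would be another stationary point, hence the maximum is strict.
-/

lemma mul_logDeriv_profile {ι : Type*} (D : Finset ι) (b : ι → ℝ) (hb : ∀ x ∈ D, 0 < b x)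
    (c a τ : ℝ) (hc : c ≠ 0) (hτ : τ ∈ Set.Ioo (0 : ℝ) 1) :
    τ * logDeriv (fun τ : ℝ => c * τ ^ a * ∏ x ∈ D, (1 - τ ^ b x)) τ
      = a - ∑ x ∈ D, b x * (τ ^ b x / (1 - τ ^ b x)) := by
  obtain ⟨h0, h1⟩ := hτ
  have hne : ∀ x ∈ D, 1 - τ ^ b x ≠ 0 := fun x hx =>
    (sub_pos.2 (Real.rpow_lt_one h0.le h1 (hb x hx))).ne'
  have hpow : ∀ p : ℝ, HasDerivAt (fun τ : ℝ => τ ^ p) (p * τ ^ (p - 1)) τ := fun p =>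
    Real.hasDerivAt_rpow_const (Or.inl h0.ne')
  have hfac : ∀ p : ℝ, HasDerivAt (fun τ : ℝ => 1 - τ ^ p) (-(p * τ ^ (p - 1))) τ := fun p =>
    (hpow p).const_sub 1
  have hpos : ∀ p : ℝ, τ ^ p ≠ 0 := fun p => (Real.rpow_pos_of_pos h0 p).ne'
  rw [logDeriv_mul (f := fun τ : ℝ => c * τ ^ a) (g := fun τ : ℝ => ∏ x ∈ D, (1 - τ ^ b x)) τ
      (mul_ne_zero hc (hpos a)) (Finset.prod_ne_zero_iff.2 hne)
      ((hpow a).const_mul c).differentiableAt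
      (DifferentiableAt.fun_finsetProd fun x _ => (hfac (b x)).differentiableAt),
    logDeriv_prod (f := fun x (τ : ℝ) => 1 - τ ^ b x) hne
      fun x _ => (hfac (b x)).differentiableAt,
    mul_add, sub_eq_add_neg, ← Finset.sum_neg_distrib, Finset.mul_sum]
  congr 1
  · rw [logDeriv_apply, ((hpow a).const_mul c).deriv, Real.rpow_sub_one h0.ne']
    have := hpos a
    field_simp
  · refine Finset.sum_congr rfl fun x hx => ?_
    rw [logDeriv_apply, (hfac (b x)).deriv, Real.rpow_sub_one h0.ne']
    have := hne x hx
    field_simp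

lemma sum_rpow_div_strictMonoOn {ι : Type*} (D : Finset ι) (hD : D.Nonempty) (b : ι → ℝ)
    (hb : ∀ x ∈ D, 0 < b x) :
    StrictMonoOn (fun τ : ℝ => ∑ x ∈ D, b x * (τ ^ b x / (1 - τ ^ b x))) (Set.Ioo 0 1) := by
  intro s hs t ht hst
  refine Finset.sum_lt_sum_of_nonempty hD fun x hx => mul_lt_mul_of_pos_left ?_ (hb x hx)
  have h1 : s ^ b x < t ^ b x := Real.rpow_lt_rpow hs.1.le hst (hb x hx)
  have h2 : t ^ b x < 1 := Real.rpow_lt_one ht.1.le ht.2 (hb x hx)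
  rw [div_lt_div_iff₀ (by linarith) (by linarith)]
  linarith

/-- for a finite nonempty set `D` with positive weights `w`, `δ > 0` and
`h > 0` with `h·δ > 1`, the function `Φ(τ; h) = hδ τ^{hδ−1} ∏_{x∈D} (1 − τ^{h w_x})` has a
unique stationary point `τ_h ∈ (0,1)` (unique zero of its derivative on `(0,1)`), and
`τ_h` is a strict global maximum of `Φ(·; h)` on `(0,1)`. -/
theorem stmt8 {ι : Type*} (D : Finset ι) (hD : D.Nonempty) (w : ι → ℝ)
    (hw : ∀ x ∈ D, 0 < w x) (δ : ℝ) (hδ : 0 < δ) (h : ℝ) (hh : 0 < h)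
    (hhδ : 1 < h * δ) :
    ∃ τh ∈ Set.Ioo (0 : ℝ) 1,
      deriv (fun τ : ℝ => h * δ * τ ^ (h * δ - 1) * ∏ x ∈ D, (1 - τ ^ (h * w x))) τh = 0 ∧
      (∀ τ ∈ Set.Ioo (0 : ℝ) 1,
        deriv (fun τ : ℝ => h * δ * τ ^ (h * δ - 1) * ∏ x ∈ D, (1 - τ ^ (h * w x))) τ = 0 →
        τ = τh) ∧
      (∀ τ ∈ Set.Ioo (0 : ℝ) 1, τ ≠ τh →
        h * δ * τ ^ (h * δ - 1) * ∏ x ∈ D, (1 - τ ^ (h * w x)) <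
          h * δ * τh ^ (h * δ - 1) * ∏ x ∈ D, (1 - τh ^ (h * w x))) := by
  have hb : ∀ x ∈ D, 0 < h * w x := fun x hx => mul_pos hh (hw x hx)
  have hc : 0 < h * δ := mul_pos hh hδ
  have ha : 0 < h * δ - 1 := sub_pos.2 hhδ
  have key := fun τ => mul_logDeriv_profile D (fun x => h * w x) hb (h * δ) (h * δ - 1) τ hc.ne'
  set F : ℝ → ℝ := fun τ => h * δ * τ ^ (h * δ - 1) * ∏ x ∈ D, (1 - τ ^ (h * w x)) with hF
  have hF0 : F 0 = 0 := by simp [hF, Real.zero_rpow ha.ne']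
  have hF1 : F 1 = 0 := by
    obtain ⟨x, hx⟩ := hD
    exact mul_eq_zero_of_right _ (Finset.prod_eq_zero hx (by simp))
  have hFpos : ∀ τ ∈ Set.Ioo (0 : ℝ) 1, 0 < F τ := fun τ hτ =>
    mul_pos (mul_pos hc (Real.rpow_pos_of_pos hτ.1 _))
      (Finset.prod_pos fun x hx => sub_pos.2 (Real.rpow_lt_one hτ.1.le hτ.2 (hb x hx)))
  have hFc : Continuous F :=
    (continuous_const.mul (Real.continuous_rpow_const ha.le)).mul
      (continuous_finsetProd _ fun x hx =>
        continuous_const.sub (Real.continuous_rpow_const (hb x hx).le))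
  have huniq : ∀ s ∈ Set.Ioo (0 : ℝ) 1, ∀ t ∈ Set.Ioo (0 : ℝ) 1,
      deriv F s = 0 → deriv F t = 0 → s = t := by
    intro s hs t ht hs0 ht0
    have es := key s hs
    have et := key t ht
    rw [logDeriv_apply, hs0, zero_div, mul_zero] at es
    rw [logDeriv_apply, ht0, zero_div, mul_zero] at et
    refine (sum_rpow_div_strictMonoOn D hD (fun x => h * w x) hb).injOn hs ht ?_
    linarith
  obtain ⟨m, hm, hmax⟩ := isCompact_Icc.exists_isMaxOn
    (Set.nonempty_Icc.2 (zero_le_one (α := ℝ))) hFc.continuousOn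
  have hmpos : 0 < F m :=
    (hFpos (1 / 2) (by norm_num)).trans_le (hmax (by norm_num : (1 / 2 : ℝ) ∈ Set.Icc 0 1))
  have hm' : m ∈ Set.Ioo (0 : ℝ) 1 := by
    refine ⟨lt_of_le_of_ne hm.1 ?_, lt_of_le_of_ne hm.2 ?_⟩
    · rintro rfl
      exact hmpos.ne' hF0
    · rintro rfl
      exact hmpos.ne' hF1
  have hstat : ∀ τ ∈ Set.Ioo (0 : ℝ) 1, F τ = F m → deriv F τ = 0 := by
    intro τ hτ e
    have hτmax : IsMaxOn F (Set.Icc 0 1) τ := fun y hy => by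
      change F y ≤ F τ
      rw [e]
      exact hmax hy
    exact (hτmax.isLocalMax (Icc_mem_nhds hτ.1 hτ.2)).deriv_eq_zero
  have hm0 := hstat m hm' rfl
  refine ⟨m, hm', hm0, fun τ hτ h0 => huniq τ hτ m hm' h0 hm0, fun τ hτ hne => ?_⟩
  exact lt_of_le_of_ne (hmax (Set.Ioo_subset_Icc_self hτ))
    fun e => hne (huniq τ hτ m hm' (hstat τ hτ e) hm0)
end

section
/- Let D be a finite nonempty set with weights w_x > 0 for each x ∈ D, and let δ > 0. Define z(h) := δ − 1/h − Σ_{x∈D} w_x / (2^{h w_x} − 1) for h > 0. Then z is strictly increasing on [1/δ, ∞), z(1/δ) < 0, z(h) → δ > 0 as h → ∞, and z has exactly one root in the interval (1/δ, ∞). -/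
/-!
If `w > 0` and `h > 0` then `2 ^ (h * w) > 1`, so each summand `w / (2 ^ (h * w) - 1)` is
positive, continuous and decreasing in `h`, and it tends to `0` as `h → ∞`. Hence `z` is
continuous and strictly increasing on `[1/δ, ∞)` (the term `-1/h` alone is already strictly
increasing) with limit `δ`, and `z (1/δ)` is minus a nonempty sum of positive terms. The
intermediate value theorem gives a root, and strict monotonicity its uniqueness.
-/

lemma two_rpow_mul_sub_one_pos {h w : ℝ} (hh : 0 < h) (hw : 0 < w) :
    0 < (2 : ℝ) ^ (h * w) - 1 :=
  sub_pos.mpr (Real.one_lt_rpow one_lt_two (mul_pos hh hw))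

lemma tendsto_div_two_rpow_mul_sub_one {w : ℝ} (hw : 0 < w) :
    Filter.Tendsto (fun h : ℝ => w / ((2 : ℝ) ^ (h * w) - 1)) Filter.atTop (nhds 0) := by
  refine Filter.Tendsto.const_div_atTop (Filter.tendsto_atTop_add_const_right _ (-1) ?_) w
  exact (tendsto_rpow_atTop_of_base_gt_one 2 one_lt_two).comp
    (Filter.tendsto_id.atTop_mul_const hw)

/-- for a finite nonempty set `D` with positive weights `w` and `δ > 0`, the
function `z(h) = δ − 1/h − Σ_{x∈D} w_x/(2^{h w_x} − 1)` is strictly increasing on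
`[1/δ, ∞)`, satisfies `z(1/δ) < 0`, tends to `δ > 0` as `h → ∞`, and has exactly one root
in `(1/δ, ∞)`. -/
theorem stmt9 {ι : Type*} (D : Finset ι) (hD : D.Nonempty) (w : ι → ℝ)
    (hw : ∀ x ∈ D, 0 < w x) (δ : ℝ) (hδ : 0 < δ) :
    StrictMonoOn (fun h : ℝ => δ - 1 / h - ∑ x ∈ D, w x / ((2 : ℝ) ^ (h * w x) - 1))
        (Set.Ici (1 / δ)) ∧
      δ - 1 / (1 / δ) - ∑ x ∈ D, w x / ((2 : ℝ) ^ ((1 / δ) * w x) - 1) < 0 ∧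
      Filter.Tendsto (fun h : ℝ => δ - 1 / h - ∑ x ∈ D, w x / ((2 : ℝ) ^ (h * w x) - 1))
        Filter.atTop (nhds δ) ∧
      (∃! h : ℝ, h ∈ Set.Ioi (1 / δ) ∧
        δ - 1 / h - ∑ x ∈ D, w x / ((2 : ℝ) ^ (h * w x) - 1) = 0) := by
  have hδ' : 0 < 1 / δ := one_div_pos.mpr hδ
  have hmono : StrictMonoOn
      (fun h : ℝ => δ - 1 / h - ∑ x ∈ D, w x / ((2 : ℝ) ^ (h * w x) - 1))
      (Set.Ici (1 / δ)) := by
    intro a ha b _ hab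
    have ha0 : 0 < a := hδ'.trans_le ha
    have hinv : 1 / b < 1 / a := one_div_lt_one_div_of_lt ha0 hab
    have hsum : ∑ x ∈ D, w x / ((2 : ℝ) ^ (b * w x) - 1)
        ≤ ∑ x ∈ D, w x / ((2 : ℝ) ^ (a * w x) - 1) := by
      refine Finset.sum_le_sum fun x hx => ?_
      have hwx := hw x hx
      refine div_le_div_of_nonneg_left hwx.le (two_rpow_mul_sub_one_pos ha0 hwx) ?_
      gcongr
      exact one_le_two
    simp only
    linarith
  have hneg : δ - 1 / (1 / δ) - ∑ x ∈ D, w x / ((2 : ℝ) ^ ((1 / δ) * w x) - 1) < 0 := by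
    have hpos : 0 < ∑ x ∈ D, w x / ((2 : ℝ) ^ ((1 / δ) * w x) - 1) :=
      Finset.sum_pos
        (fun x hx => div_pos (hw x hx) (two_rpow_mul_sub_one_pos hδ' (hw x hx))) hD
    rw [one_div_one_div]
    linarith
  have hlim : Filter.Tendsto
      (fun h : ℝ => δ - 1 / h - ∑ x ∈ D, w x / ((2 : ℝ) ^ (h * w x) - 1))
      Filter.atTop (nhds δ) := by
    have hinv : Filter.Tendsto (fun h : ℝ => 1 / h) Filter.atTop (nhds 0) :=
      Filter.tendsto_id.const_div_atTop 1
    have hsum := tendsto_finsetSum D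
      fun x hx => tendsto_div_two_rpow_mul_sub_one (hw x hx)
    simpa using (hinv.const_sub δ).sub hsum
  have hcont : ContinuousOn
      (fun h : ℝ => δ - 1 / h - ∑ x ∈ D, w x / ((2 : ℝ) ^ (h * w x) - 1))
      (Set.Ici (1 / δ)) := by
    refine (continuousOn_const.sub (continuousOn_const.div continuousOn_id
      fun h hh => (hδ'.trans_le hh).ne')).sub (continuousOn_finsetSum D fun x hx => ?_)
    refine continuousOn_const.div ?_
      fun h hh => (two_rpow_mul_sub_one_pos (hδ'.trans_le hh) (hw x hx)).ne'
    have hpow : Continuous fun h : ℝ => (2 : ℝ) ^ (h * w x) :=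
      Continuous.rpow continuous_const (by fun_prop) fun _ => Or.inl two_ne_zero
    exact (hpow.sub continuous_const).continuousOn
  refine ⟨hmono, hneg, hlim, ?_⟩
  obtain ⟨b, hb, hbδ⟩ :=
    ((hlim.eventually_const_lt hδ).and (Filter.eventually_ge_atTop (1 / δ))).exists
  obtain ⟨c, hc, hc0⟩ := intermediate_value_Ioo hbδ
    (hcont.mono Set.Icc_subset_Ici_self) ⟨hneg, hb⟩
  refine ⟨c, ⟨hc.1, hc0⟩, fun y hy => ?_⟩
  exact hmono.injOn (Set.Ioi_subset_Ici_self hy.1) (Set.Ioi_subset_Ici_self hc.1)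
    (hy.2.trans hc0.symm)
end

section
/- Let D be a finite nonempty set with weights w_x > 0 for each x ∈ D, let δ > 0, and let h > 1/δ satisfy δ = 1/h + Σ_{x∈D} w_x / (2^{h w_x} − 1). Then the unique global maximizer of the function Φ(τ; h) := h δ τ^{hδ−1} ∏_{x∈D} (1 − τ^{h w_x}) over τ ∈ (0,1) is τ = 1/2; that is, Φ(τ; h) < Φ(1/2; h) for every τ ∈ (0,1) with τ ≠ 1/2. -/
/-!
The root condition says `h δ - 1 = ∑ x, a_x / (2 ^ a_x - 1)` with `a_x = h w_x`, so up to the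
constant `h δ` the function is a product over `x` of factors
`τ ^ (a / (2 ^ a - 1)) * (1 - τ ^ a)`. Each of these factors alone has its unique maximum on
`(0, 1)` at `τ = 1 / 2` (`factor_lt`), and all factors are positive, so the same holds for the
product.
-/

/-- A single factor is uniquely maximized at `1 / 2`. With `z = (2 τ) ^ a` and
`k = 1 / (2 ^ a - 1)`, the ratio of the two sides is `z ^ k * (1 - k * (z - 1))`, which is less
than `1` by `log z < z - 1` and `1 + u ≤ exp u`. -/
theorem factor_lt {a τ : ℝ} (ha : 0 < a) (h0 : 0 < τ) (hne : τ ≠ 1 / 2) :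
    τ ^ (a / ((2 : ℝ) ^ a - 1)) * (1 - τ ^ a) <
      (1 / 2 : ℝ) ^ (a / ((2 : ℝ) ^ a - 1)) * (1 - (1 / 2 : ℝ) ^ a) := by
  have hB : (1 : ℝ) < 2 ^ a := Real.one_lt_rpow (by norm_num) ha
  have h2τ : 0 < 2 * τ := by positivity
  have hz0 : 0 < (2 * τ) ^ a := Real.rpow_pos_of_pos h2τ a
  have hz1 : (2 * τ) ^ a ≠ 1 := by
    intro H
    have := (Real.rpow_left_inj h2τ.le zero_le_one ha.ne').1 (H.trans (Real.one_rpow a).symm)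
    exact hne (by linarith)
  have hzmul : (2 * τ) ^ a = 2 ^ a * τ ^ a := Real.mul_rpow (by norm_num) h0.le
  have hhalf : (1 / 2 : ℝ) ^ a = 1 / 2 ^ a := by
    rw [Real.div_rpow (by norm_num) (by norm_num), Real.one_rpow]
  have hsplit : τ ^ (a / ((2 : ℝ) ^ a - 1)) =
      (1 / 2 : ℝ) ^ (a / ((2 : ℝ) ^ a - 1)) * ((2 * τ) ^ a) ^ (1 / ((2 : ℝ) ^ a - 1)) := by
    rw [← Real.rpow_mul h2τ.le, mul_one_div, ← Real.mul_rpow (by norm_num) h2τ.le]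
    congr 1
    ring
  rw [hsplit, hhalf, mul_assoc]
  have hc : 0 < (1 / 2 : ℝ) ^ (a / ((2 : ℝ) ^ a - 1)) := by positivity
  refine mul_lt_mul_of_pos_left ?_ hc
  have hτa : τ ^ a = (2 * τ) ^ a / 2 ^ a := by
    rw [hzmul]
    field_simp
  rw [hτa]
  generalize (2 * τ) ^ a = z at *
  generalize (2 : ℝ) ^ a = B at *
  have hB1 : 0 < B - 1 := by linarith
  have hk : 0 < 1 / (B - 1) := by positivity
  have hfac : 1 - z / B = (1 - 1 / B) * (1 - 1 / (B - 1) * (z - 1)) := by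
    have : B ≠ 0 := by linarith
    field_simp
    ring
  have hpos : 0 < 1 - 1 / B := by
    rw [sub_pos, div_lt_one (by linarith)]
    exact hB
  have hpow : z ^ (1 / (B - 1)) < Real.exp (1 / (B - 1) * (z - 1)) := by
    rw [Real.rpow_def_of_pos hz0, Real.exp_lt_exp, mul_comm]
    exact mul_lt_mul_of_pos_left (Real.log_lt_sub_one_of_pos hz0 hz1) hk
  have hlin : 1 - 1 / (B - 1) * (z - 1) ≤ Real.exp (-(1 / (B - 1) * (z - 1))) := by
    linarith [Real.add_one_le_exp (-(1 / (B - 1) * (z - 1)))]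
  have hlt : z ^ (1 / (B - 1)) * (1 - 1 / (B - 1) * (z - 1)) < 1 := by
    calc z ^ (1 / (B - 1)) * (1 - 1 / (B - 1) * (z - 1))
        ≤ z ^ (1 / (B - 1)) * Real.exp (-(1 / (B - 1) * (z - 1))) :=
          mul_le_mul_of_nonneg_left hlin (by positivity)
      _ < Real.exp (1 / (B - 1) * (z - 1)) * Real.exp (-(1 / (B - 1) * (z - 1))) :=
          mul_lt_mul_of_pos_right hpow (Real.exp_pos _)
      _ = 1 := by rw [← Real.exp_add, add_neg_cancel, Real.exp_zero]
  rw [hfac]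
  calc z ^ (1 / (B - 1)) * ((1 - 1 / B) * (1 - 1 / (B - 1) * (z - 1)))
      = (1 - 1 / B) * (z ^ (1 / (B - 1)) * (1 - 1 / (B - 1) * (z - 1))) := by ring
    _ < (1 - 1 / B) * 1 := mul_lt_mul_of_pos_left hlt hpos
    _ = 1 - 1 / B := mul_one _

/-- for a finite nonempty set `D` with positive weights `w`, `δ > 0`, and
`h > 1/δ` satisfying `δ = 1/h + Σ_{x∈D} w_x/(2^{h w_x} − 1)`, the unique global maximizer
of `Φ(τ; h) = hδ τ^{hδ−1} ∏_{x∈D} (1 − τ^{h w_x})` over `τ ∈ (0,1)` is `τ = 1/2`: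
`Φ(τ; h) < Φ(1/2; h)` for every `τ ∈ (0,1)` with `τ ≠ 1/2`. -/
theorem stmt10 {ι : Type*} (D : Finset ι) (hD : D.Nonempty) (w : ι → ℝ)
    (hw : ∀ x ∈ D, 0 < w x) (δ : ℝ) (hδ : 0 < δ) (h : ℝ) (hh : 1 / δ < h)
    (hroot : δ = 1 / h + ∑ x ∈ D, w x / ((2 : ℝ) ^ (h * w x) - 1)) :
    ∀ τ ∈ Set.Ioo (0 : ℝ) 1, τ ≠ 1 / 2 →
      h * δ * τ ^ (h * δ - 1) * ∏ x ∈ D, (1 - τ ^ (h * w x)) <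
        h * δ * (1 / 2 : ℝ) ^ (h * δ - 1) * ∏ x ∈ D, (1 - (1 / 2 : ℝ) ^ (h * w x)) := by
  intro τ hτ hne
  have hh0 : 0 < h := lt_trans (by positivity) hh
  have hexp : h * δ - 1 = ∑ x ∈ D, h * w x / ((2 : ℝ) ^ (h * w x) - 1) := by
    rw [hroot, mul_add, mul_one_div_cancel hh0.ne', add_sub_cancel_left, Finset.mul_sum]
    exact Finset.sum_congr rfl fun x _ => (mul_div_assoc _ _ _).symm
  rw [mul_assoc (h * δ), mul_assoc (h * δ), hexp, Real.rpow_sum_of_pos hτ.1,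
    Real.rpow_sum_of_pos (by norm_num : (0 : ℝ) < 1 / 2), ← Finset.prod_mul_distrib,
    ← Finset.prod_mul_distrib]
  refine mul_lt_mul_of_pos_left ?_ (mul_pos hh0 hδ)
  refine Finset.prod_lt_prod_of_nonempty (fun x hx => ?_) (fun x hx => ?_) hD
  · exact mul_pos (Real.rpow_pos_of_pos hτ.1 _)
      (sub_pos.2 (Real.rpow_lt_one hτ.1.le hτ.2 (mul_pos hh0 (hw x hx))))
  · exact factor_lt (mul_pos hh0 (hw x hx)) hτ.1 hne
end

section
/- Let I be a finite set with weights w_x > 0 for each x ∈ I, and let S ⊆ I be a proper subset (so that δ := Σ_{x ∈ I∖S} w_x > 0). Then for every h > 0, the weighted sampling-without-replacement probability of S satisfies P_w(S) = ∫₀¹ h δ τ^{hδ−1} ∏_{x∈S} (1 − τ^{h w_x}) dτ. -/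
/-!
Fix the undrawn weight `δ` and let `S` vary. Writing `w(S) = ∑_{x∈S} w x`, both sides of the identity
equal `1` at `S = ∅` and satisfy the recursion `(δ + w(S)) P(S) = ∑_{x∈S} w x P(S∖x)`.

For the sampling probability, this is conditioning on the first draw (`orderingSum_succ`). For the
integral, it says that the derivative of `τ^(hδ) ∏_{x∈S} (1 - τ^(h w x))`, a function vanishing at
both endpoints when `S` is nonempty, integrates to zero (`integral_walleniusKernel_rec`). Induction on
the cardinality of `S` (`orderingSum_eq_integral`) concludes.
-/

/-- The weighted sampling-without-replacement probability of drawing exactly the set `S`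
(in `S.card` draws) from a finite population with positive weights `w` and total weight
`W = Σ_x w_x`: the sum, over all orderings `(x₁,…,x_m)` of the elements of `S`, of
`∏_{j=1}^m w_{x_j} / (W − Σ_{i<j} w_{x_i})`.  Orderings are modeled as embeddings
`Fin S.card ↪ ι` whose image is `S`. -/
noncomputable def samplingProb {ι : Type*} [Fintype ι] [DecidableEq ι]
    (w : ι → ℝ) (S : Finset ι) : ℝ :=
  ∑ e ∈ Finset.univ.filter
      (fun e : Fin S.card ↪ ι => Finset.univ.map e = S),
    ∏ j : Fin S.card,
      w (e j) / ((∑ x, w x) - ∑ i ∈ Finset.univ.filter (fun i => i < j), w (e i))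

open Finset

/-- The integrand `τ^(a-1) ∏_{x∈S} (1 - τ^(b x))`, with the constant factor `a` left out; it is used
with `a = hδ` and `b = h w`. -/
noncomputable def walleniusKernel {ι : Type*} (a : ℝ) (b : ι → ℝ) (S : Finset ι) (τ : ℝ) : ℝ :=
  τ ^ (a - 1) * ∏ x ∈ S, (1 - τ ^ b x)

theorem intervalIntegrable_walleniusKernel {ι : Type*} {a : ℝ} (ha : 0 < a) {b : ι → ℝ}
    (hb : ∀ x, 0 < b x) (S : Finset ι) :
    IntervalIntegrable (walleniusKernel a b S) MeasureTheory.volume 0 1 := by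
  apply IntervalIntegrable.mul_continuousOn
  · exact intervalIntegral.intervalIntegrable_rpow' (by linarith)
  · apply Continuous.continuousOn
    refine continuous_finsetProd _ fun x _ => ?_
    exact continuous_const.sub (Real.continuous_rpow_const (hb x).le)

/-- For nonempty `S` the function `τ^a ∏_{x∈S} (1 - τ^(b x))` vanishes at both `0` and `1`, and its
derivative is `(a + ∑_{x∈S} b x) K_S - ∑_{x∈S} b x K_{S∖x}` with `K` the kernel. -/
theorem integral_walleniusKernel_rec {ι : Type*} [DecidableEq ι] {a : ℝ} (ha : 0 < a) {b : ι → ℝ}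
    (hb : ∀ x, 0 < b x) {S : Finset ι} (hS : S.Nonempty) :
    (a + ∑ x ∈ S, b x) * ∫ τ in (0 : ℝ)..1, walleniusKernel a b S τ =
      ∑ x ∈ S, b x * ∫ τ in (0 : ℝ)..1, walleniusKernel a b (S.erase x) τ := by
  have hcont : Continuous fun τ : ℝ => τ ^ a * ∏ x ∈ S, (1 - τ ^ b x) :=
    (Real.continuous_rpow_const ha.le).mul <| continuous_finsetProd _ fun x _ =>
      continuous_const.sub (Real.continuous_rpow_const (hb x).le)
  have hderiv : ∀ τ ∈ Set.Ioo (0 : ℝ) 1,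
      HasDerivAt (fun τ : ℝ => τ ^ a * ∏ x ∈ S, (1 - τ ^ b x))
        ((a + ∑ x ∈ S, b x) * walleniusKernel a b S τ -
          ∑ x ∈ S, b x * walleniusKernel a b (S.erase x) τ) τ := by
    intro τ hτ
    have h0 : τ ≠ 0 := hτ.1.ne'
    have hprod := HasDerivAt.fun_finsetProd (u := S) (f := fun x (τ : ℝ) => 1 - τ ^ b x)
      (f' := fun x => -(b x * τ ^ (b x - 1))) (x := τ)
      fun x _ => (Real.hasDerivAt_rpow_const (Or.inl h0)).const_sub 1
    refine ((Real.hasDerivAt_rpow_const (p := a) (Or.inl h0)).mul hprod).congr_deriv ?_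
    -- Uses `τ^(b x) ∏_{S∖x} = ∏_{S∖x} - ∏_S`, where the products are those of `1 - τ^(b y)`.
    have key : ∀ x ∈ S, τ ^ a * ((∏ y ∈ S.erase x, (1 - τ ^ b y)) • (-(b x * τ ^ (b x - 1)))) =
        b x * walleniusKernel a b S τ - b x * walleniusKernel a b (S.erase x) τ := by
      intro x hx
      unfold walleniusKernel
      rw [← mul_prod_erase S _ hx, Real.rpow_sub_one h0, Real.rpow_sub_one h0]
      simp only [smul_eq_mul]
      field_simp
      ring
    rw [mul_sum, sum_congr rfl key, sum_sub_distrib, ← sum_mul]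
    unfold walleniusKernel
    ring
  have hint : ∀ T : Finset ι, IntervalIntegrable (walleniusKernel a b T) MeasureTheory.volume 0 1 :=
    intervalIntegrable_walleniusKernel ha hb
  have hsum : IntervalIntegrable (fun τ => ∑ x ∈ S, b x * walleniusKernel a b (S.erase x) τ)
      MeasureTheory.volume 0 1 := by
    have := IntervalIntegrable.sum S (f := fun x τ => b x * walleniusKernel a b (S.erase x) τ)
      (μ := MeasureTheory.volume) (a := 0) (b := 1) fun x _ => (hint _).const_mul _
    simpa only [Finset.sum_fn] using this
  have hftc := intervalIntegral.integral_eq_sub_of_hasDerivAt_of_le zero_le_one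
    hcont.continuousOn hderiv (((hint S).const_mul _).sub hsum)
  rw [intervalIntegral.integral_sub ((hint S).const_mul _) hsum,
    intervalIntegral.integral_const_mul,
    intervalIntegral.integral_finsetSum fun x _ => (hint _).const_mul _] at hftc
  simp only [intervalIntegral.integral_const_mul] at hftc
  have h1 : ∏ x ∈ S, (1 - (1 : ℝ) ^ b x) = 0 := by
    obtain ⟨x, hx⟩ := hS
    exact prod_eq_zero hx (by simp)
  rw [h1, Real.zero_rpow ha.ne'] at hftc
  linarith

/-- The sum defining `samplingProb`, with the number of draws `n` and the total weight `W` made free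
parameters, so that it can be unfolded one draw at a time. It is zero when `n ≠ S.card`. -/
noncomputable def orderingSum {ι : Type*} [Fintype ι] [DecidableEq ι] (w : ι → ℝ) (n : ℕ)
    (S : Finset ι) (W : ℝ) : ℝ :=
  ∑ e ∈ univ.filter (fun e : Fin n ↪ ι => univ.map e = S),
    ∏ j : Fin n, w (e j) / (W - ∑ i ∈ univ.filter (fun i => i < j), w (e i))

theorem orderingSum_zero {ι : Type*} [Fintype ι] [DecidableEq ι] (w : ι → ℝ) (W : ℝ) :
    orderingSum w 0 ∅ W = 1 := by
  simp [orderingSum]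

/-- Conditioning on the first draw `x`: what remains is a draw of `S∖x` from total weight `W - w x`. -/
theorem orderingSum_succ {ι : Type*} [Fintype ι] [DecidableEq ι] (w : ι → ℝ) (n : ℕ)
    (S : Finset ι) (W : ℝ) :
    orderingSum w (n + 1) S W =
      ∑ x ∈ S, w x / W * orderingSum w n (S.erase x) (W - w x) := by
  unfold orderingSum
  simp_rw [mul_sum]
  rw [sum_sigma']
  refine sum_bij'
    (i := fun e _ => ⟨e 0, (Fin.succEmb n).trans e⟩)
    (j := fun p hp => ⟨Fin.cons p.1 p.2, ?_⟩) ?_ ?_ ?_ ?_ ?_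
  · rw [mem_sigma, mem_filter] at hp
    rw [Fin.cons_injective_iff]
    refine ⟨?_, p.2.injective⟩
    rintro ⟨i, hi⟩
    have : p.2 i ∈ S.erase p.1 := by rw [← hp.2.2]; simp
    simp [hi] at this
  · intro e he
    rw [mem_filter] at he
    rw [mem_sigma, mem_filter]
    refine ⟨by rw [← he.2]; simp, mem_univ _, ?_⟩
    rw [← he.2]
    ext y
    simp only [mem_map, mem_univ, true_and, mem_erase, Fin.exists_fin_succ]
    constructor
    · rintro ⟨i, rfl⟩
      exact ⟨by simp, Or.inr ⟨i, rfl⟩⟩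
    · rintro ⟨h1, h | h⟩
      · exact absurd h.symm h1
      · exact h
  · intro p hp
    rw [mem_sigma, mem_filter] at hp
    rw [mem_filter]
    refine ⟨mem_univ _, ?_⟩
    refine Eq.trans ?_ ((congrArg (insert p.1) hp.2.2).trans (insert_erase hp.1))
    ext y
    simp [Fin.exists_fin_succ, eq_comm]
  · intro e he
    ext i
    refine Fin.cases ?_ (fun i => ?_) i <;> simp
  · rintro ⟨x, e⟩ hp
    simp only [Function.Embedding.coeFn_mk, Fin.cons_zero]
    congr 1
  · intro e he
    rw [Fin.prod_univ_succ]
    congr 1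
    · simp
    · refine prod_congr rfl fun j _ => ?_
      have : ∑ i ∈ univ.filter (fun i => i < j.succ), w (e i) =
          w (e 0) + ∑ i ∈ univ.filter (fun i => i < j), w (e i.succ) := by
        rw [sum_filter, Fin.sum_univ_succ, sum_filter]
        simp
      rw [this]
      simp [sub_sub]

/-- Removing a drawn element leaves the undrawn weight `δ` unchanged, so both sides satisfy the same
recursion in `S` for fixed `δ`. -/
theorem orderingSum_eq_integral {ι : Type*} [Fintype ι] [DecidableEq ι] {w : ι → ℝ}
    (hw : ∀ x, 0 < w x) {δ h : ℝ} (hδ : 0 < δ) (hh : 0 < h) (n : ℕ) :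
    ∀ S : Finset ι, S.card = n → orderingSum w n S (δ + ∑ x ∈ S, w x) =
      h * δ * ∫ τ in (0 : ℝ)..1, walleniusKernel (h * δ) (fun x => h * w x) S τ := by
  have hd : 0 < h * δ := mul_pos hh hδ
  induction n with
  | zero =>
    intro S hS
    rw [card_eq_zero] at hS
    subst hS
    rw [orderingSum_zero]
    simp only [walleniusKernel, prod_empty, mul_one]
    rw [integral_rpow (Or.inl (by linarith))]
    simp [Real.zero_rpow hd.ne']
    field_simp
  | succ n ih =>
    intro S hS
    have hrec := integral_walleniusKernel_rec hd (fun x => mul_pos hh (hw x))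
      (card_pos.1 (by omega) : S.Nonempty)
    have hW : 0 < δ + ∑ x ∈ S, w x :=
      add_pos_of_pos_of_nonneg hδ (sum_nonneg fun x _ => (hw x).le)
    rw [orderingSum_succ]
    have hstep : ∀ x ∈ S, w x / (δ + ∑ x ∈ S, w x) *
        orderingSum w n (S.erase x) (δ + ∑ x ∈ S, w x - w x) =
        δ / (δ + ∑ x ∈ S, w x) * (h * w x *
          ∫ τ in (0 : ℝ)..1, walleniusKernel (h * δ) (fun x => h * w x) (S.erase x) τ) := by
      intro x hx
      have : δ + ∑ x ∈ S, w x - w x = δ + ∑ x ∈ S.erase x, w x := by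
        rw [← add_sum_erase S w hx]; ring
      rw [this, ih _ (by rw [card_erase_of_mem hx, hS]; rfl)]
      ring
    rw [sum_congr rfl hstep, ← mul_sum, ← hrec, ← mul_sum]
    field_simp

/-- Wallenius integral representation: for a finite population `I` (here,
all of `ι`) with positive weights and a proper subset `S` (so that
`δ = Σ_{x∉S} w_x > 0`), for every `h > 0`,
`P_w(S) = ∫₀¹ hδ τ^{hδ−1} ∏_{x∈S} (1 − τ^{h w_x}) dτ`. -/
theorem stmt11 {ι : Type*} [Fintype ι] [DecidableEq ι] (w : ι → ℝ) (hw : ∀ x, 0 < w x)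
    (S : Finset ι) (hS : S ≠ Finset.univ) (h : ℝ) (hh : 0 < h) :
    samplingProb w S =
      ∫ τ in (0 : ℝ)..1,
        h * (∑ x ∈ Sᶜ, w x) * τ ^ (h * (∑ x ∈ Sᶜ, w x) - 1) *
          ∏ x ∈ S, (1 - τ ^ (h * w x)) := by
  have hδ : 0 < ∑ x ∈ Sᶜ, w x :=
    Finset.sum_pos (fun x _ => hw x) (by rwa [nonempty_iff_ne_empty, ne_eq, compl_eq_empty_iff])
  have hmain := orderingSum_eq_integral hw hδ hh S.card S rfl
  rw [sum_compl_add_sum] at hmain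
  refine hmain.trans ?_
  rw [← intervalIntegral.integral_const_mul]
  simp only [walleniusKernel, mul_assoc]
end

section
/- Let I be a finite set with weights w_x > 0 for each x ∈ I, let D ⊊ I be a subset with δ := Σ_{x ∈ I∖D} w_x > 0, let K ≥ 1, let t₁,…,t_K ∈ I∖D be pairwise distinct, and let c₁,…,c_K ∈ D be pairwise distinct. Define the swapped set S := (D ∖ {c₁,…,c_K}) ∪ {t₁,…,t_K}, the quantity d := Σ_{k=1}^{K} (w_{c_k} − w_{t_k}), and for τ ∈ (0,1) and h > 0 the functions Φ(τ; h) := h δ τ^{hδ−1} ∏_{x∈D} (1 − τ^{h w_x}) and η(τ; h) := τ^{h d} · ((δ + d)/δ) · ∏_{k=1}^{K} (1 − τ^{h w_{t_k}}) / (1 − τ^{h w_{c_k}}). Then for every h > 0, the weighted sampling-without-replacement probability of S satisfies P_w(S) = ∫₀¹ Φ(τ; h) · η(τ; h) dτ. -/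
/-- The Wallenius integral `∫₀¹ b τ^(b-1) ∏_{x∈S} (1 - τ^(u x)) dτ`. -/
noncomputable def wallenius {ι : Type*} (u : ι → ℝ) (S : Finset ι) (b : ℝ) : ℝ :=
  ∫ τ in (0 : ℝ)..1, b * τ ^ (b - 1) * ∏ x ∈ S, (1 - τ ^ u x)

lemma wallenius_empty {ι : Type*} (u : ι → ℝ) (b : ℝ) (hb : 0 < b) :
    wallenius u ∅ b = 1 := by
  simp only [wallenius, Finset.prod_empty, mul_one, intervalIntegral.integral_const_mul]
  rw [integral_rpow (Or.inl (by linarith))]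
  simp [Real.zero_rpow hb.ne', hb.ne']

lemma wallenius_integrable {ι : Type*} (u : ι → ℝ) (hu : ∀ x, 0 < u x) (S : Finset ι)
    (b : ℝ) (hb : 0 < b) :
    IntervalIntegrable (fun τ : ℝ => b * τ ^ (b - 1) * ∏ x ∈ S, (1 - τ ^ u x))
      MeasureTheory.volume 0 1 := by
  refine IntervalIntegrable.mul_continuousOn
    ((intervalIntegral.intervalIntegrable_rpow' (by linarith)).const_mul b) ?_
  refine Continuous.continuousOn ?_
  refine continuous_finsetProd _ fun x _ => ?_
  exact continuous_const.sub (Real.continuous_rpow_const (hu x).le)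

/-- Conditioning on the first draw: the integral obeys the recursion of the sampling
probability.  It expresses that `τ^b ∏_{x∈S} (1 - τ^(u x))` vanishes at `0` and `1`, so that
its derivative integrates to `0`. -/
lemma wallenius_rec {ι : Type*} [DecidableEq ι] (u : ι → ℝ) (hu : ∀ x, 0 < u x)
    (S : Finset ι) (hS : S.Nonempty) (b : ℝ) (hb : 0 < b) :
    (b + ∑ x ∈ S, u x) * wallenius u S b = ∑ x ∈ S, u x * wallenius u (S.erase x) b := by
  set f : Finset ι → ℝ → ℝ := fun T τ => b * τ ^ (b - 1) * ∏ x ∈ T, (1 - τ ^ u x) with hf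
  have hint : ∀ T, IntervalIntegrable (f T) MeasureTheory.volume 0 1 := fun T =>
    wallenius_integrable u hu T b hb
  -- On `(0, 1)`, `g` is `b` times the derivative of `τ^b ∏ (1 - τ^(u x))`.
  set g : ℝ → ℝ := fun τ =>
    (b + ∑ x ∈ S, u x) * f S τ - ∑ x ∈ S, u x * f (S.erase x) τ with hg
  have hsumint : IntervalIntegrable (fun τ => ∑ x ∈ S, u x * f (S.erase x) τ)
      MeasureTheory.volume 0 1 := by
    have := IntervalIntegrable.sum (μ := MeasureTheory.volume) (a := 0) (b := 1) S
      (f := fun x τ => u x * f (S.erase x) τ) (fun x _ => (hint (S.erase x)).const_mul (u x))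
    simpa only [Finset.sum_fn] using this
  have hgint : IntervalIntegrable g MeasureTheory.volume 0 1 :=
    ((hint S).const_mul _).sub hsumint
  have hcont : ContinuousOn (fun τ : ℝ => b * (τ ^ b * ∏ x ∈ S, (1 - τ ^ u x)))
      (Set.Icc 0 1) := by
    refine Continuous.continuousOn ?_
    refine continuous_const.mul ((Real.continuous_rpow_const hb.le).mul ?_)
    refine continuous_finsetProd _ fun x _ => ?_
    exact continuous_const.sub (Real.continuous_rpow_const (hu x).le)
  have hderiv : ∀ τ ∈ Set.Ioo (0 : ℝ) 1,
      HasDerivAt (fun τ : ℝ => b * (τ ^ b * ∏ x ∈ S, (1 - τ ^ u x))) (g τ) τ := by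
    intro τ hτ
    have h1 : ∀ p : ℝ, HasDerivAt (fun τ : ℝ => τ ^ p) (p * τ ^ (p - 1)) τ := fun p =>
      Real.hasDerivAt_rpow_const (Or.inl hτ.1.ne')
    have h2 := HasDerivAt.fun_finsetProd (u := S) (f := fun x (τ : ℝ) => 1 - τ ^ u x)
      (x := τ) (fun x _ => (h1 (u x)).const_sub 1)
    refine (((h1 b).mul h2).const_mul b).congr_deriv ?_
    simp only [hg, hf, smul_eq_mul, mul_add, add_mul, Finset.mul_sum, Finset.sum_mul]
    rw [add_sub_assoc, ← Finset.sum_sub_distrib]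
    congr 1
    refine Finset.sum_congr rfl fun x hx => ?_
    rw [← Finset.mul_prod_erase S _ hx]
    have e1 : τ ^ b = τ ^ (b - 1) * τ := by
      rw [Real.rpow_sub_one hτ.1.ne', div_mul_cancel₀ _ hτ.1.ne']
    have e2 : τ ^ u x = τ ^ (u x - 1) * τ := by
      rw [Real.rpow_sub_one hτ.1.ne', div_mul_cancel₀ _ hτ.1.ne']
    rw [e1, e2]
    ring
  have hzero := intervalIntegral.integral_eq_sub_of_hasDerivAt_of_le zero_le_one hcont hderiv
    hgint
  obtain ⟨y, hy⟩ := hS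
  have hone : ∏ x ∈ S, (1 - (1 : ℝ) ^ u x) = 0 := Finset.prod_eq_zero hy (by simp)
  rw [hone, Real.zero_rpow hb.ne'] at hzero
  simp only [hg] at hzero
  rw [intervalIntegral.integral_sub ((hint S).const_mul _) hsumint,
    intervalIntegral.integral_finsetSum (fun x _ => (hint (S.erase x)).const_mul (u x))]
    at hzero
  simp only [intervalIntegral.integral_const_mul] at hzero
  have : ∀ T, wallenius u T b = ∫ τ in (0 : ℝ)..1, f T τ := fun T => rfl
  simp only [this]
  linarith

/-- For `S` with `n + 1` elements, an ordering of `S` is a first element `x ∈ S` followed by an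
ordering of `S.erase x`. -/
lemma image_cons_eq_iff {ι : Type*} [DecidableEq ι] {n : ℕ} (S : Finset ι)
    (hS : S.card = n + 1) (x : ι) (g : Fin n → ι) :
    Finset.univ.image (Fin.cons x g : Fin (n + 1) → ι) = S ↔
      x ∈ S ∧ Finset.univ.image g = S.erase x := by
  have himg : Finset.univ.image (Fin.cons x g : Fin (n + 1) → ι)
      = insert x (Finset.univ.image g) := by
    ext y
    simp [Fin.exists_fin_succ, eq_comm]
  rw [himg]
  constructor
  · intro hx
    have hcard : (Finset.univ.image g).card ≤ n := by
      simpa using Finset.card_image_le (s := Finset.univ) (f := g)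
    have hnot : x ∉ Finset.univ.image g := by
      intro hmem
      rw [Finset.insert_eq_of_mem hmem] at hx
      rw [hx] at hcard
      omega
    rw [← hx]
    exact ⟨Finset.mem_insert_self _ _, (Finset.erase_insert hnot).symm⟩
  · rintro ⟨hx, hg⟩
    rw [hg, Finset.insert_erase hx]

/-- Orderings are taken here as functions `Fin n → ι` with image `S`; they are automatically
injective when `S` has `n` elements. -/
lemma sum_orderings_eq_wallenius {ι : Type*} [Fintype ι] [DecidableEq ι] (u : ι → ℝ)
    (hu : ∀ x, 0 < u x) (b : ℝ) (hb : 0 < b) (n : ℕ) :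
    ∀ S : Finset ι, S.card = n →
      (∑ f : Fin n → ι, if Finset.univ.image f = S then
        ∏ j, u (f j) / ((b + ∑ x ∈ S, u x)
          - ∑ i ∈ Finset.univ.filter (fun i => i < j), u (f i)) else 0)
      = wallenius u S b := by
  induction n with
  | zero =>
    intro S hS
    obtain rfl := Finset.card_eq_zero.mp hS
    simp [wallenius_empty u b hb]
  | succ n ih =>
    intro S hS
    have hne : S.Nonempty := Finset.card_pos.mp (by omega)
    have hWpos : 0 < b + ∑ x ∈ S, u x :=
      add_pos_of_pos_of_nonneg hb (Finset.sum_nonneg fun x _ => (hu x).le)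
    rw [← (Fin.consEquiv (fun _ : Fin (n + 1) => ι)).sum_comp, Fintype.sum_prod_type]
    have hcons : ∀ (x : ι) (g : Fin n → ι),
        Fin.consEquiv (fun _ : Fin (n + 1) => ι) (x, g) = (Fin.cons x g : Fin (n + 1) → ι) :=
      fun _ _ => rfl
    simp only [hcons, image_cons_eq_iff S hS]
    rw [← mul_right_inj' hWpos.ne', wallenius_rec u hu S hne b hb, Finset.mul_sum,
      ← Finset.sum_subset (Finset.subset_univ S)]
    · refine Finset.sum_congr rfl fun x hx => ?_
      rw [← ih (S.erase x) (by rw [Finset.card_erase_of_mem hx, hS]; rfl), Finset.mul_sum,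
        Finset.mul_sum]
      refine Finset.sum_congr rfl fun g _ => ?_
      simp only [hx, true_and]
      split_ifs
      · have hE := Finset.add_sum_erase S u hx
        rw [Fin.prod_univ_succ]
        simp only [Fin.cons_zero, Fin.cons_succ, Finset.sum_filter, Fin.sum_univ_succ,
          Fin.succ_lt_succ_iff, Fin.succ_pos, if_true, lt_irrefl, if_false, Fin.not_lt_zero,
          Finset.sum_const_zero, add_zero, sub_zero]
        rw [← mul_assoc, mul_div_cancel₀ _ hWpos.ne']
        congr 1
        refine Finset.prod_congr rfl fun j _ => ?_
        congr 1
        linarith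
      · simp
    · intro x _ hx
      simp [hx]

lemma samplingProb_eq_wallenius {ι : Type*} [Fintype ι] [DecidableEq ι] (w : ι → ℝ)
    (hw : ∀ x, 0 < w x) (S : Finset ι) (a : ℝ) (ha : 0 < a) (haS : a = ∑ x ∈ Sᶜ, w x)
    (h : ℝ) (hh : 0 < h) :
    samplingProb w S = wallenius (fun x => h * w x) S (h * a) := by
  rw [← sum_orderings_eq_wallenius (fun x => h * w x) (fun x => mul_pos hh (hw x)) (h * a)
    (mul_pos hh ha) S.card S rfl, samplingProb, ← Finset.sum_filter]
  refine Finset.sum_bij (fun e _ => ⇑e) ?_ ?_ ?_ ?_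
  · intro e he
    simp only [Finset.mem_filter, Finset.mem_univ, true_and, Finset.map_eq_image] at he ⊢
    exact he
  · intro e _ e' _ hee
    exact DFunLike.coe_injective hee
  · intro f hf
    simp only [Finset.mem_filter, Finset.mem_univ, true_and] at hf
    have hinj : Function.Injective f := by
      rw [← Set.injOn_univ, ← Finset.coe_univ, ← Finset.card_image_iff, hf]
      simp
    refine ⟨⟨f, hinj⟩, ?_, rfl⟩
    simp only [Finset.mem_filter, Finset.mem_univ, true_and, Finset.map_eq_image]
    exact hf
  · intro e _
    refine Finset.prod_congr rfl fun j _ => ?_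
    rw [← Finset.mul_sum, ← Finset.mul_sum, ← mul_add, ← mul_sub,
      mul_div_mul_left _ _ hh.ne', haS, Finset.sum_compl_add_sum]

/-- Wallenius integral representation for a swapped observation set: with
`D ⊊ univ`, `δ = Σ_{x∉D} w_x`, pairwise-distinct `t₁,…,t_K ∉ D` and `c₁,…,c_K ∈ D`,
swapped set `S = (D ∖ {c₁,…,c_K}) ∪ {t₁,…,t_K}`, and `d = Σ_k (w_{c_k} − w_{t_k})`,
for every `h > 0`,
`P_w(S) = ∫₀¹ Φ(τ;h) · η(τ;h) dτ`, where
`Φ(τ;h) = hδ τ^{hδ−1} ∏_{x∈D}(1−τ^{h w_x})` and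
`η(τ;h) = τ^{hd} ((δ+d)/δ) ∏_k (1−τ^{h w_{t_k}})/(1−τ^{h w_{c_k}})`. -/
theorem stmt12 {ι : Type*} [Fintype ι] [DecidableEq ι] (w : ι → ℝ) (hw : ∀ x, 0 < w x)
    (D : Finset ι) (hD : D ≠ Finset.univ) (K : ℕ) (hK : 1 ≤ K)
    (t c : Fin K → ι) (ht : Function.Injective t) (hc : Function.Injective c)
    (htD : ∀ k, t k ∉ D) (hcD : ∀ k, c k ∈ D)
    (δ d : ℝ) (hδ : δ = ∑ x ∈ Dᶜ, w x) (hd : d = ∑ k, (w (c k) - w (t k)))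
    (h : ℝ) (hh : 0 < h) :
    samplingProb w ((D \ Finset.image c Finset.univ) ∪ Finset.image t Finset.univ) =
      ∫ τ in (0 : ℝ)..1,
        (h * δ * τ ^ (h * δ - 1) * ∏ x ∈ D, (1 - τ ^ (h * w x))) *
          (τ ^ (h * d) * ((δ + d) / δ) *
            ∏ k, (1 - τ ^ (h * w (t k))) / (1 - τ ^ (h * w (c k)))) := by
  set S := (D \ Finset.image c Finset.univ) ∪ Finset.image t Finset.univ with hS
  have hsub : Finset.image c Finset.univ ⊆ D := by
    intro x hx
    obtain ⟨k, -, rfl⟩ := Finset.mem_image.mp hx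
    exact hcD k
  have hdisj : Disjoint (D \ Finset.image c Finset.univ) (Finset.image t Finset.univ) := by
    rw [Finset.disjoint_right]
    intro x hx hxD
    obtain ⟨k, -, rfl⟩ := Finset.mem_image.mp hx
    exact htD k (Finset.mem_sdiff.mp hxD).1
  have hδpos : 0 < δ := by
    rw [hδ]
    refine Finset.sum_pos (fun x _ => hw x) ?_
    rwa [← Finset.compl_ne_univ_iff_nonempty, compl_compl]
  have hsumD : δ + ∑ x ∈ D, w x = ∑ x, w x := by
    rw [hδ]; exact Finset.sum_compl_add_sum D w
  have hsumS : ∑ x ∈ S, w x = ∑ x ∈ D, w x - d := by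
    rw [hS, Finset.sum_union hdisj, Finset.sum_image ht.injOn, hd, Finset.sum_sub_distrib,
      ← Finset.sum_sdiff hsub, Finset.sum_image hc.injOn]
    ring
  -- `S` has as many elements as `D`, so it is also a proper subset, and its complement has
  -- positive weight `δ + d`.
  have hScard : S.card = D.card := by
    rw [hS, Finset.card_union_of_disjoint hdisj, Finset.card_sdiff_of_subset hsub,
      Finset.card_image_of_injective _ ht, Finset.card_image_of_injective _ hc]
    have := Finset.card_le_card hsub
    rw [Finset.card_image_of_injective _ hc] at this
    omega
  have hSne : S ≠ Finset.univ := by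
    intro h0
    apply hD
    rw [← Finset.card_eq_iff_eq_univ, ← hScard, h0, Finset.card_univ]
  have hSc : ∑ x ∈ Sᶜ, w x = δ + d := by
    have := Finset.sum_compl_add_sum S w
    linarith
  have hpos : 0 < δ + d := by
    rw [← hSc]
    refine Finset.sum_pos (fun x _ => hw x) ?_
    rwa [← Finset.compl_ne_univ_iff_nonempty, compl_compl]
  rw [samplingProb_eq_wallenius w hw S (δ + d) hpos hSc.symm h hh, wallenius,
    intervalIntegral.integral_of_le zero_le_one, intervalIntegral.integral_of_le zero_le_one,
    MeasureTheory.integral_Ioc_eq_integral_Ioo, MeasureTheory.integral_Ioc_eq_integral_Ioo]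
  refine MeasureTheory.setIntegral_congr_fun measurableSet_Ioo fun τ hτ => ?_
  have hne : ∀ k, 1 - τ ^ (h * w (c k)) ≠ 0 := fun k =>
    (sub_pos.mpr (Real.rpow_lt_one hτ.1.le hτ.2 (mul_pos hh (hw _)))).ne'
  have hprod : ∏ x ∈ S, (1 - τ ^ (h * w x)) = (∏ x ∈ D, (1 - τ ^ (h * w x))) *
      ∏ k, (1 - τ ^ (h * w (t k))) / (1 - τ ^ (h * w (c k))) := by
    rw [hS, Finset.prod_union hdisj, Finset.prod_image ht.injOn, ← Finset.prod_sdiff hsub,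
      Finset.prod_image hc.injOn, Finset.prod_div_distrib]
    have : ∏ k, (1 - τ ^ (h * w (c k))) ≠ 0 := Finset.prod_ne_zero_iff.mpr fun k _ => hne k
    field_simp
  have hpow : τ ^ (h * (δ + d) - 1) = τ ^ (h * δ - 1) * τ ^ (h * d) := by
    rw [← Real.rpow_add hτ.1]; congr 1; ring
  simp only [hprod, hpow]
  field_simp
end

section
/- Let n > 1, let x₁,…,x_n ∈ {0,1} and w₁,…,w_n ∈ (0,1), set δ := Σ_{i=1}^{n} (1 − x_i) w_i and s := Σ_{i=1}^{n} x_i, and assume δ > 0. Suppose h > 0 satisfies δ = 1/h + Σ_{i=1}^{n} x_i w_i / (2^{h w_i} − 1). Then ( ((2n/δ) / (2^{2n/δ} − 1)) · (s/n) + 1/n ) · (1/δ) ≤ h ≤ (1 + n/log 2) · (1/δ), where log denotes the natural logarithm. -/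
/-!
With `g y = y / (2 ^ y - 1)`, multiplying the root equation by `h` gives
`δ h = 1 + ∑ i, x i * g (h * w i)`.
On `(0, ∞)` the function `g` is bounded by `1 / log 2` (`div_two_rpow_sub_one_le`) and antitone
(`div_two_rpow_sub_one_anti`). The bound yields `δ h ≤ 1 + s / log 2 ≤ 1 + n / log 2`, which is the
upper estimate. Since `n ≥ 2` and `log 2 ≥ 2 / 3`, the latter is at most `2 n`; hence
`h * w i ≤ h ≤ 2 n / δ`, and antitonicity yields `δ h ≥ 1 + s * g (2 n / δ)`, which is stronger
than the lower estimate by a factor `n`.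
-/

lemma two_rpow_sub_one_pos {y : ℝ} (hy : 0 < y) : 0 < (2 : ℝ) ^ y - 1 :=
  sub_pos.2 (Real.one_lt_rpow one_lt_two hy)

lemma div_two_rpow_sub_one_le {y : ℝ} (hy : 0 < y) :
    y / ((2 : ℝ) ^ y - 1) ≤ 1 / Real.log 2 := by
  have hL : 0 < Real.log 2 := Real.log_pos one_lt_two
  rw [div_le_div_iff₀ (two_rpow_sub_one_pos hy) hL, Real.rpow_def_of_pos two_pos]
  linarith [Real.add_one_le_exp (Real.log 2 * y)]

/-- The slope of the convex function `2 ^ y` from `0` is monotone; the convexity is used in the form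
of Bernoulli's inequality for the exponent `y / z ∈ [0, 1]`. -/
lemma div_two_rpow_sub_one_anti {y z : ℝ} (hy : 0 < y) (hyz : y ≤ z) :
    z / ((2 : ℝ) ^ z - 1) ≤ y / ((2 : ℝ) ^ y - 1) := by
  have hz : 0 < z := hy.trans_le hyz
  have hz1 := two_rpow_sub_one_pos hz
  have key := rpow_one_add_le_one_add_mul_self (s := (2 : ℝ) ^ z - 1) (p := y / z)
    (by linarith) (by positivity) ((div_le_one hz).2 hyz)
  rw [add_sub_cancel, ← Real.rpow_mul two_pos.le, mul_div_cancel₀ _ hz.ne'] at key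
  rw [div_le_div_iff₀ hz1 (two_rpow_sub_one_pos hy)]
  have h2 : z * ((2 : ℝ) ^ y - 1) ≤ z * (y / z * ((2 : ℝ) ^ z - 1)) :=
    mul_le_mul_of_nonneg_left (by linarith) hz.le
  rwa [← mul_assoc, mul_div_cancel₀ _ hz.ne'] at h2

/-- finite-sample bounds on the scaling parameter: let `n > 1`,
`x_i ∈ {0,1}`, `w_i ∈ (0,1)`, `δ = Σ (1−x_i) w_i > 0`, `s = Σ x_i`, and suppose `h > 0`
solves `δ = 1/h + Σ_i x_i w_i/(2^{h w_i} − 1)`.  Then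
`((2n/δ)/(2^{2n/δ} − 1) · (s/n) + 1/n) · (1/δ) ≤ h ≤ (1 + n/log 2) · (1/δ)`. -/
theorem stmt13 (n : ℕ) (hn : 1 < n) (x w : Fin n → ℝ)
    (hx : ∀ i, x i = 0 ∨ x i = 1) (hw : ∀ i, w i ∈ Set.Ioo (0 : ℝ) 1)
    (δ s : ℝ) (hδdef : δ = ∑ i, (1 - x i) * w i) (hsdef : s = ∑ i, x i)
    (hδ : 0 < δ) (h : ℝ) (hh : 0 < h)
    (hroot : δ = 1 / h + ∑ i, x i * w i / ((2 : ℝ) ^ (h * w i) - 1)) :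
    ((2 * n / δ) / ((2 : ℝ) ^ (2 * n / δ) - 1) * (s / n) + 1 / n) * (1 / δ) ≤ h ∧
      h ≤ (1 + n / Real.log 2) * (1 / δ) := by
  have hL : 0 < Real.log 2 := Real.log_pos one_lt_two
  have hn2 : (2 : ℝ) ≤ n := by exact_mod_cast hn
  have hn0 : (0 : ℝ) < n := by linarith
  have hx0 : ∀ i, 0 ≤ x i := fun i => by rcases hx i with e | e <;> simp [e]
  have hx1 : ∀ i, x i ≤ 1 := fun i => by rcases hx i with e | e <;> simp [e]
  have hs0 : 0 ≤ s := hsdef ▸ Finset.sum_nonneg fun i _ => hx0 i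
  have hsn : s ≤ n := by
    rw [hsdef]
    simpa using Finset.sum_le_sum fun i (_ : i ∈ Finset.univ) => hx1 i
  have hy : ∀ i, 0 < h * w i := fun i => mul_pos hh (hw i).1
  have hroot' : h * δ = 1 + ∑ i, x i * (h * w i / ((2 : ℝ) ^ (h * w i) - 1)) := by
    rw [hroot, mul_add, mul_one_div_cancel hh.ne', Finset.mul_sum]
    congr 1
    exact Finset.sum_congr rfl fun i _ => by ring
  have hup : h * δ ≤ 1 + n / Real.log 2 := by
    have h1 : ∑ i, x i * (h * w i / ((2 : ℝ) ^ (h * w i) - 1)) ≤ s * (1 / Real.log 2) := by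
      rw [hsdef, Finset.sum_mul]
      exact Finset.sum_le_sum fun i _ =>
        mul_le_mul_of_nonneg_left (div_two_rpow_sub_one_le (hy i)) (hx0 i)
    have h2 : s * (1 / Real.log 2) ≤ n / Real.log 2 := by
      rw [mul_one_div]
      gcongr
    linarith
  refine ⟨?_, by rwa [mul_one_div, le_div_iff₀ hδ]⟩
  have h2n : 1 + n / Real.log 2 ≤ 2 * n := by
    have h1 : (n : ℝ) / Real.log 2 ≤ 2 * n - 1 := by
      rw [div_le_iff₀ hL]
      nlinarith [Real.log_two_gt_d9]
    linarith
  have hle : h ≤ 2 * n / δ := by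
    rw [le_div_iff₀ hδ]
    linarith
  have hg0 : 0 ≤ (2 * n / δ) / ((2 : ℝ) ^ (2 * n / δ) - 1) :=
    div_nonneg (by positivity) (two_rpow_sub_one_pos (by positivity)).le
  have hlow : s * ((2 * n / δ) / ((2 : ℝ) ^ (2 * n / δ) - 1)) ≤
      ∑ i, x i * (h * w i / ((2 : ℝ) ^ (h * w i) - 1)) := by
    rw [hsdef, Finset.sum_mul]
    exact Finset.sum_le_sum fun i _ => mul_le_mul_of_nonneg_left
      (div_two_rpow_sub_one_anti (hy i)
        ((mul_le_of_le_one_right hh.le (hw i).2.le).trans hle)) (hx0 i)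
  rw [mul_one_div, div_le_iff₀ hδ, hroot']
  set g := (2 * n / δ) / ((2 : ℝ) ^ (2 * n / δ) - 1)
  have h3 : g * (s / n) ≤ s * g := by
    rw [mul_comm s g]
    exact mul_le_mul_of_nonneg_left (div_le_self hs0 (by linarith)) hg0
  have h4 : 1 / (n : ℝ) ≤ 1 := div_le_self zero_le_one (by linarith)
  linarith
end
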